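/- Let Γ = (𝒞, 𝒳, I, H, η, ε, ℰ, ℱ) be a closed Galois structure such that 𝒞 is pointed protomodular, (𝒞, ℰ) satisfies axioms (E4), (E5) and (M), and I preserves pullbacks of type (1). Then there is a closed Galois structure Γ₁ = (Ext_ℰ(𝒞), NExt_Γ(𝒞), I₁, H₁, η¹, ε¹, ℰ¹, ℱ¹), where H₁ is the inclusion of the category NExt_Γ(𝒞) of Γ-normal extensions into Ext_ℰ(𝒞) and I₁ its left adjoint, such that: Ext_ℰ(𝒞) is pointed protomodular; (Ext_ℰ(𝒞), ℰ¹) satisfies (E4), (E5) and (M); and I₁ preserves every pullback in Ext_ℰ(𝒞) of a morphism g ∈ ℰ¹ which is a split epimorphism along a morphism h ∈ ℰ¹. -/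

import Mathlib

open CategoryTheory Limits

universe v u

section Axioms
variable {𝒟 : Type u} [Category.{v} 𝒟]

/-- Axiom (E1): the class contains all isomorphisms. -/
def AxE1 (E : MorphismProperty 𝒟) : Prop := ∀ {X Y : 𝒟} (f : X ⟶ Y), IsIso f → E f

/-- Axiom (E2): pullbacks of morphisms of the class exist and belong to the class. -/
def AxE2 (E : MorphismProperty 𝒟) : Prop :=
  ∀ {X Y Z : 𝒟} (f : X ⟶ Z) (g : Y ⟶ Z), E g →
    ∃ (P : 𝒟) (p₁ : P ⟶ X) (p₂ : P ⟶ Y), IsPullback p₁ p₂ f g ∧ E p₁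

/-- Axiom (E3): the class is closed under composition. -/
def AxE3 (E : MorphismProperty 𝒟) : Prop :=
  ∀ {X Y Z : 𝒟} (f : X ⟶ Y) (g : Y ⟶ Z), E f → E g → E (f ≫ g)

/-- Axiom (E4): if `f ≫ g` is in the class then so is `g`. -/
def AxE4 (E : MorphismProperty 𝒟) : Prop :=
  ∀ {X Y Z : 𝒟} (f : X ⟶ Y) (g : Y ⟶ Z), E (f ≫ g) → E g

/-- Axiom (E5): in a morphism of short exact sequences over a fixed base `A₀`, if the
extension `a` and the induced morphism `k` on kernels lie in the class, then so does the
middle morphism `f`. -/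
def AxE5 [HasZeroMorphisms 𝒟] (E : MorphismProperty 𝒟) : Prop :=
  ∀ {K L A₁ B A₀ : 𝒟} (ka : K ⟶ A₁) (kb : L ⟶ B) (a : A₁ ⟶ A₀) (b : B ⟶ A₀)
    (f : A₁ ⟶ B) (k : K ⟶ L), f ≫ b = a → k ≫ kb = ka ≫ f →
    ∀ (ha : ka ≫ a = 0) (hb : kb ≫ b = 0),
    Nonempty (IsLimit (KernelFork.ofι ka ha)) →
    Nonempty (IsLimit (KernelFork.ofι kb hb)) →
    E a → E k → E f

/-- The split short five lemma in a pointed category. -/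
def SplitShortFive (𝒟 : Type u) [Category.{v} 𝒟] [HasZeroMorphisms 𝒟] : Prop :=
  ∀ {K A B K' A' B' : 𝒟} (k : K ⟶ A) (f : A ⟶ B) (s : B ⟶ A)
    (k' : K' ⟶ A') (f' : A' ⟶ B') (s' : B' ⟶ A')
    (u : K ⟶ K') (v : A ⟶ A') (w : B ⟶ B'),
    s ≫ f = 𝟙 B → s' ≫ f' = 𝟙 B' →
    ∀ (hk : k ≫ f = 0) (hk' : k' ≫ f' = 0),
    Nonempty (IsLimit (KernelFork.ofι k hk)) →
    Nonempty (IsLimit (KernelFork.ofι k' hk')) →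
    u ≫ k' = k ≫ v → v ≫ f' = f ≫ w →
    IsIso u → IsIso w → IsIso v

/-- Pullbacks along split epimorphisms exist. -/
def HasSplitEpiPullbacks (𝒟 : Type u) [Category.{v} 𝒟] : Prop :=
  ∀ {X Y Z : 𝒟} (g : X ⟶ Z) (s : Z ⟶ X), s ≫ g = 𝟙 Z → ∀ h : Y ⟶ Z,
    ∃ (P : 𝒟) (p₁ : P ⟶ X) (p₂ : P ⟶ Y), IsPullback p₁ p₂ g h

/-- A pointed category is protomodular when it has pullbacks along split epimorphisms
and the split short five lemma holds. -/
def ProtomodularCat (𝒟 : Type u) [Category.{v} 𝒟] [HasZeroMorphisms 𝒟] : Prop :=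
  HasSplitEpiPullbacks 𝒟 ∧ SplitShortFive 𝒟

/-- An object of the `E`-slice category `(𝒟 ↓_E B)`: a morphism of `E` with codomain `B`. -/
structure ESliceObj (E : MorphismProperty 𝒟) (B : 𝒟) where
  dom : 𝒟
  hom : dom ⟶ B
  mem : E hom

/-- Morphisms of the `E`-slice category. -/
@[ext] structure ESliceHom {E : MorphismProperty 𝒟} {B : 𝒟} (g h : ESliceObj E B) where
  top : g.dom ⟶ h.dom
  w : top ≫ h.hom = g.hom

instance {E : MorphismProperty 𝒟} {B : 𝒟} : Category (ESliceObj E B) where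
  Hom := ESliceHom
  id g := ⟨𝟙 g.dom, Category.id_comp _⟩
  comp φ ψ := ⟨φ.top ≫ ψ.top, by rw [Category.assoc, ψ.w, φ.w]⟩
  id_comp φ := ESliceHom.ext (Category.id_comp φ.top)
  comp_id φ := ESliceHom.ext (Category.comp_id φ.top)
  assoc φ ψ χ := ESliceHom.ext (Category.assoc φ.top ψ.top χ.top)

/-- A functor `(𝒟 ↓_E B) ⥤ (𝒟 ↓_E A)` realizing base change (pullback) along
`f : A ⟶ B`. -/
structure PullbackFunctorAlong (E : MorphismProperty 𝒟) {A B : 𝒟} (f : A ⟶ B) where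
  R : ESliceObj E B ⥤ ESliceObj E A
  top : ∀ g : ESliceObj E B, (R.obj g).dom ⟶ g.dom
  isPB : ∀ g : ESliceObj E B, IsPullback (top g) (R.obj g).hom g.hom f
  nat : ∀ {g h : ESliceObj E B} (φ : g ⟶ h), (R.map φ).top ≫ top h = top g ≫ φ.top

/-- Axiom (M): every morphism of the class is monadic, i.e. any base-change functor
`f* : (𝒟 ↓_E B) ⥤ (𝒟 ↓_E A)` along a morphism `f` of `E` is a monadic right adjoint. -/
def AxM (E : MorphismProperty 𝒟) : Prop :=
  ∀ {A B : 𝒟} (f : A ⟶ B), E f →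
    ∀ P : PullbackFunctorAlong E f, Nonempty (MonadicRightAdjoint P.R)

/-- An object of the category `Ext_E(𝒟)` of `E`-extensions: a morphism of class `E`. -/
structure ExtObj (E : MorphismProperty 𝒟) where
  dom : 𝒟
  cod : 𝒟
  hom : dom ⟶ cod
  mem : E hom

/-- Morphisms of `Ext_E(𝒟)`: commutative squares. -/
@[ext] structure ExtHom {E : MorphismProperty 𝒟} (a b : ExtObj E) where
  top : a.dom ⟶ b.dom
  bot : a.cod ⟶ b.cod
  w : top ≫ b.hom = a.hom ≫ bot

instance {E : MorphismProperty 𝒟} : Category (ExtObj E) where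
  Hom := ExtHom
  id a := ⟨𝟙 a.dom, 𝟙 a.cod, by simp⟩
  comp φ ψ := ⟨φ.top ≫ ψ.top, φ.bot ≫ ψ.bot, by
    rw [Category.assoc, ψ.w, ← Category.assoc, φ.w, Category.assoc]⟩
  id_comp φ := ExtHom.ext (Category.id_comp φ.top) (Category.id_comp φ.bot)
  comp_id φ := ExtHom.ext (Category.comp_id φ.top) (Category.comp_id φ.bot)
  assoc φ ψ χ := ExtHom.ext (Category.assoc φ.top ψ.top χ.top)
    (Category.assoc φ.bot ψ.bot χ.bot)

instance {E : MorphismProperty 𝒟} [HasZeroMorphisms 𝒟] :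
    HasZeroMorphisms (ExtObj E) where
  zero a b := ⟨⟨0, 0, by simp⟩⟩
  comp_zero φ c := ExtHom.ext (comp_zero) (comp_zero)
  zero_comp a {b c} φ := ExtHom.ext (zero_comp) (zero_comp)

/-- A morphism of `Ext_E(𝒟)` is a double `E`-extension when its two components are in `E`
and the comparison morphism to (any) pullback is in `E`. -/
def IsDoubleExt {E : MorphismProperty 𝒟} {a b : ExtObj E} (φ : a ⟶ b) : Prop :=
  E φ.top ∧ E φ.bot ∧
  ∀ {P : 𝒟} (p₁ : P ⟶ a.cod) (p₂ : P ⟶ b.dom), IsPullback p₁ p₂ φ.bot b.hom →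
    ∀ (l : a.dom ⟶ P), l ≫ p₁ = a.hom → l ≫ p₂ = φ.top → E l

/-- The class of double `E`-extensions, as a morphism property of `Ext_E(𝒟)`. -/
def DoubleExtClass (E : MorphismProperty 𝒟) : MorphismProperty (ExtObj E) :=
  fun _ _ φ => IsDoubleExt φ


/-- A functor preserves pullbacks of type (1): pullbacks of a split epimorphism `g ∈ ℰ`
along a morphism `h ∈ ℰ`. -/
def PreservesType1 (E : MorphismProperty 𝒟) (T : 𝒟 ⥤ 𝒟) : Prop :=
  ∀ {A B D C : 𝒟} (k : A ⟶ B) (l : A ⟶ D) (g : B ⟶ C) (h : D ⟶ C) (s : C ⟶ B),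
    s ≫ g = 𝟙 C → E g → E h → IsPullback k l g h →
    IsPullback (T.map k) (T.map l) (T.map g) (T.map h)

/-- A functor between pointed categories is protoadditive when it preserves split short
exact sequences (equivalently: zero morphisms and kernels of split epimorphisms). -/
structure Protoadditive {𝒟' : Type*} [Category 𝒟'] [HasZeroMorphisms 𝒟]
    [HasZeroMorphisms 𝒟'] (T : 𝒟 ⥤ 𝒟') : Prop where
  map_zero : ∀ (X Y : 𝒟), T.map (0 : X ⟶ Y) = 0
  preserves : ∀ {K A B : 𝒟} (k : K ⟶ A) (f : A ⟶ B) (s : B ⟶ A),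
    s ≫ f = 𝟙 B → ∀ (hk : k ≫ f = 0),
    Nonempty (IsLimit (KernelFork.ofι k hk)) →
    Nonempty (IsLimit (KernelFork.ofι (T.map k)
      (show T.map k ≫ T.map f = 0 by rw [← T.map_comp, hk, map_zero])))

end Axioms

/-- A closed Galois structure `Γ = (𝒞, 𝒳, I, H, η, ε, ℰ, ℱ)`: the replete full reflective
subcategory `𝒳` of `𝒞` is given by the predicate `inX`, the reflector `I` (composed with
the inclusion `H`) with unit `η` and the reflection universal property; the classes of
extensions `ℰ` (in `𝒞`) and `ℱ` (in `𝒳`) satisfy (E1)–(E3), `I(ℰ) ⊆ ℱ`, `H(ℱ) ⊆ ℰ`,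
unit components lie in `ℰ`, and the counit is an isomorphism. -/
structure GaloisStructure (𝒞 : Type u) [Category.{v} 𝒞] where
  inX : 𝒞 → Prop
  inX_iso : ∀ {X Y : 𝒞}, (X ≅ Y) → inX X → inX Y
  I : 𝒞 ⥤ 𝒞
  η : 𝟭 𝒞 ⟶ I
  I_mem : ∀ C : 𝒞, inX (I.obj C)
  refl_univ : ∀ {C D : 𝒞}, inX D → ∀ f : C ⟶ D, ∃! g : I.obj C ⟶ D, η.app C ≫ g = f
  η_iso_of_mem : ∀ {C : 𝒞}, inX C → IsIso (η.app C)
  E : MorphismProperty 𝒞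
  F : MorphismProperty 𝒞
  F_sub_E : ∀ {X Y : 𝒞} (f : X ⟶ Y), F f → E f
  F_in_X : ∀ {X Y : 𝒞} (f : X ⟶ Y), F f → inX X ∧ inX Y
  E1 : AxE1 E
  E2 : AxE2 E
  E3 : AxE3 E
  F1 : ∀ {X Y : 𝒞} (f : X ⟶ Y), inX X → inX Y → IsIso f → F f
  F2 : ∀ {X Y Z : 𝒞} (f : X ⟶ Z) (g : Y ⟶ Z), inX X → F g →
    ∃ (P : 𝒞) (p₁ : P ⟶ X) (p₂ : P ⟶ Y), IsPullback p₁ p₂ f g ∧ F p₁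
  F3 : ∀ {X Y Z : 𝒞} (f : X ⟶ Y) (g : Y ⟶ Z), F f → F g → F (f ≫ g)
  I_map_mem : ∀ {X Y : 𝒞} (f : X ⟶ Y), E f → F (I.map f)
  η_mem : ∀ C : 𝒞, E (η.app C)

namespace GaloisStructure

variable {𝒞 : Type u} [Category.{v} 𝒞] (G : GaloisStructure 𝒞)

/-- An extension is `Γ`-trivial when the naturality square of the unit at it is a
pullback. -/
def Trivial {A B : 𝒞} (f : A ⟶ B) : Prop :=
  IsPullback (G.η.app A) f (G.I.map f) (G.η.app B)

/-- An extension is `Γ`-normal when it lies in `ℰ` and the first projection of its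
kernel pair is `Γ`-trivial (in the presence of axiom (M) every morphism of `ℰ` is
monadic, so this agrees with the usual definition of normal extension). -/
def Normal {A B : 𝒞} (f : A ⟶ B) : Prop :=
  G.E f ∧ ∀ {P : 𝒞} (p₁ p₂ : P ⟶ A), IsPullback p₁ p₂ f f → G.Trivial p₁

end GaloisStructure

/-!
A morphism of extensions whose codomain component lies in `ℰ` is a double extension exactly when its
restriction to kernels lies in `ℰ`, by (E5); so the closure properties of `ℰ` pass to double
extensions. Axiom (M) says that the morphisms of `ℰ` are regular epimorphisms along which descent
data are effective, and descent data for extensions are glued componentwise.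

For an extension `a : A → B` with kernel pair `p₁, p₂ : R → A`, the kernel pair acts on `p₁`, with
quotient `a`. As `I` preserves the pullbacks of type (1), the action passes to the trivialization of
`p₁`, and effective descent along `a` produces an extension of `B` whose base change along `a` is
this trivialization. It is the pushout of the trivialization along `p₂`, it is normal, and this
pushout is the reflection of `a`. Preservation of pullbacks by the reflection can be tested after
base change along the extensions, where it is preservation of pullbacks by the trivialization.
-/

section Limits

variable {𝒜 𝒞 : Type*} [Category 𝒜] [Category 𝒞]

theorem isPullback_of_isPullback_vertices {F M N O : Square 𝒞} {m : F ⟶ M} {n : F ⟶ N}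
    {f : M ⟶ O} {g : N ⟶ O} (hM : M.IsPullback) (hN : N.IsPullback) (hO : O.IsPullback)
    (h₁ : IsPullback m.τ₁ n.τ₁ f.τ₁ g.τ₁) (h₂ : IsPullback m.τ₂ n.τ₂ f.τ₂ g.τ₂)
    (h₃ : IsPullback m.τ₃ n.τ₃ f.τ₃ g.τ₃) : F.IsPullback := by
  refine IsPullback.mk' F.fac (fun T φ ψ h₁₂ h₁₃ ↦ h₁.hom_ext ?_ ?_) fun T a b hab ↦ ?_
  · exact hM.hom_ext (by simp only [Category.assoc, ← m.comm₁₂, reassoc_of% h₁₂])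
      (by simp only [Category.assoc, ← m.comm₁₃, reassoc_of% h₁₃])
  · exact hN.hom_ext (by simp only [Category.assoc, ← n.comm₁₂, reassoc_of% h₁₂])
      (by simp only [Category.assoc, ← n.comm₁₃, reassoc_of% h₁₃])
  · obtain ⟨x, hx₂, hx₃⟩ := hM.exists_lift (a ≫ m.τ₂) (b ≫ m.τ₃)
      (by simp only [Category.assoc, ← m.comm₂₄, ← m.comm₃₄, reassoc_of% hab])
    obtain ⟨y, hy₂, hy₃⟩ := hN.exists_lift (a ≫ n.τ₂) (b ≫ n.τ₃)
      (by simp only [Category.assoc, ← n.comm₂₄, ← n.comm₃₄, reassoc_of% hab])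
    have hxy : x ≫ f.τ₁ = y ≫ g.τ₁ := hO.hom_ext
      (by simp only [Category.assoc, ← f.comm₁₂, ← g.comm₁₂, reassoc_of% hx₂, reassoc_of% hy₂,
        h₂.w])
      (by simp only [Category.assoc, ← f.comm₁₃, ← g.comm₁₃, reassoc_of% hx₃, reassoc_of% hy₃,
        h₃.w])
    obtain ⟨z, hzx, hzy⟩ := h₁.exists_lift x y hxy
    refine ⟨z, h₂.hom_ext ?_ ?_, h₃.hom_ext ?_ ?_⟩
    · rw [Category.assoc, m.comm₁₂, reassoc_of% hzx, hx₂]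
    · rw [Category.assoc, n.comm₁₂, reassoc_of% hzy, hy₂]
    · rw [Category.assoc, m.comm₁₃, reassoc_of% hzx, hx₃]
    · rw [Category.assoc, n.comm₁₃, reassoc_of% hzy, hy₃]

variable {F M N O : 𝒜 ⥤ 𝒞}

theorem isPullback_map_of_isPullback_app {m : F ⟶ M} {n : F ⟶ N} {f : M ⟶ O} {g : N ⟶ O}
    (h : ∀ X, IsPullback (m.app X) (n.app X) (f.app X) (g.app X)) {sq : Square 𝒜}
    (hM : (sq.map M).IsPullback) (hN : (sq.map N).IsPullback) (hO : (sq.map O).IsPullback) :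
    (sq.map F).IsPullback :=
  isPullback_of_isPullback_vertices (m := (Square.mapFunctor.map m).app sq)
    (n := (Square.mapFunctor.map n).app sq) (f := (Square.mapFunctor.map f).app sq)
    (g := (Square.mapFunctor.map g).app sq) hM hN hO (h _) (h _) (h _)

variable (f : M ⟶ O) (g : N ⟶ O) [∀ X, HasPullback (f.app X) (g.app X)]

instance (X : 𝒜) : HasLimit ((cospan f g).flip.obj X) :=
  hasLimit_of_iso (F := cospan (f.app X) (g.app X))
    (diagramIsoCospan ((cospan f g).flip.obj X)).symm

theorem isPullback_app_pullback (X : 𝒜) :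
    IsPullback ((pullback.fst f g).app X) ((pullback.snd f g).app X) (f.app X) (g.app X) :=
  (IsPullback.of_hasPullback f g).map ((evaluation 𝒜 𝒞).obj X)

theorem isPullback_map_const (X : 𝒞) (sq : Square 𝒜) :
    (sq.map ((Functor.const 𝒜).obj X)).IsPullback :=
  IsPullback.of_id_fst

end Limits

section Kernels

variable {𝒞 : Type*} [Category 𝒞] [HasZeroMorphisms 𝒞]

theorem isPullback_zero_iff_isLimit_kernelFork {K A B Z : 𝒞} (hZ : IsZero Z) {k : K ⟶ A}
    {f : A ⟶ B} (w : k ≫ f = 0) :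
    IsPullback k (0 : K ⟶ Z) f 0 ↔ Nonempty (IsLimit (KernelFork.ofι k w)) := by
  refine ⟨fun h ↦ ⟨?_⟩, fun ⟨h⟩ ↦ ?_⟩
  · have : Mono k := ⟨fun x y hxy ↦ h.hom_ext hxy (hZ.eq_of_tgt _ _)⟩
    exact KernelFork.IsLimit.ofι' k w fun a ha ↦
      ⟨h.lift a 0 (by rw [ha, comp_zero]), h.lift_fst _ _ _⟩
  · refine IsPullback.mk' (by rw [w, comp_zero])
      (fun T x y hxy _ ↦ Fork.IsLimit.hom_ext h hxy) fun T a b hab ↦ ?_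
    exact ⟨KernelFork.IsLimit.lift' h a (by rw [hab, comp_zero]) |>.1,
      (KernelFork.IsLimit.lift' h a _).2, hZ.eq_of_tgt _ _⟩

end Kernels

/-- Extension classes of a pointed category: the axioms (E1)–(E5), with (E1)–(E3) expressed by the
stability conditions of the library (see `isExtensionClass_iff`). -/
class IsExtensionClass {𝒟 : Type u} [Category.{v} 𝒟] [HasZeroMorphisms 𝒟]
    (E : MorphismProperty 𝒟) : Prop
    extends E.IsMultiplicative, E.IsStableUnderBaseChange, E.HasPullbacks where
  right_of_comp : AxE4 E
  middle : AxE5 E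

section ExtensionClass

variable {𝒟 : Type u} [Category.{v} 𝒟] [HasZeroMorphisms 𝒟]

theorem isExtensionClass_iff {E : MorphismProperty 𝒟} :
    IsExtensionClass E ↔ AxE1 E ∧ AxE2 E ∧ AxE3 E ∧ AxE4 E ∧ AxE5 E := by
  refine ⟨fun _ ↦ ⟨fun f _ ↦ E.of_isIso f, fun f g hg ↦ ?_, fun f g ↦ E.comp_mem f g,
    IsExtensionClass.right_of_comp, IsExtensionClass.middle⟩, fun ⟨h₁, h₂, h₃, h₄, h₅⟩ ↦
    { id_mem X := h₁ _ inferInstance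
      comp_mem := h₃
      of_isPullback {X Y Y' S f g f' g'} sq hg := ?_
      hasPullback {X Y S f} g hf := ?_
      right_of_comp := h₄
      middle := h₅ }⟩
  · have := E.hasPullback f hg
    have sq := (IsPullback.of_hasPullback g f).flip
    exact ⟨_, _, _, sq, E.of_isPullback sq.flip hg⟩
  · obtain ⟨P, p₁, p₂, hP, hp₁⟩ := h₂ f g hg
    rw [← sq.flip.isoIsPullback_hom_fst _ _ hP]
    exact h₃ _ _ (h₁ _ inferInstance) hp₁
  · obtain ⟨P, p₁, p₂, hP, -⟩ := h₂ g f hf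
    exact hP.flip.hasPullback

theorem mem_of_section (E : MorphismProperty 𝒟) [IsExtensionClass E] {X Y : 𝒟} {g : X ⟶ Y}
    {s : Y ⟶ X} (hs : s ≫ g = 𝟙 Y) : E g :=
  IsExtensionClass.right_of_comp s g (hs ▸ E.id_mem Y)

theorem hasSplitEpiPullbacks_of_isExtensionClass (E : MorphismProperty 𝒟) [IsExtensionClass E] :
    HasSplitEpiPullbacks 𝒟 :=
  fun g _ hs h ↦
    have := (E.hasPullback (f := g) h (mem_of_section E hs))
    ⟨_, _, _, IsPullback.of_hasPullback g h⟩

theorem mem_map_of_isPullback_kernel {E : MorphismProperty 𝒟} [IsExtensionClass E] {𝒜 : Type*}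
    [Category 𝒜] [HasZeroMorphisms 𝒜] (T : 𝒜 ⥤ 𝒟) {Z K L A B C : 𝒜} (hZ : IsZero (T.obj Z))
    {ka : K ⟶ A} {kb : L ⟶ B} {a : A ⟶ C} {b : B ⟶ C} {f : A ⟶ B} {k : K ⟶ L} (hf : f ≫ b = a)
    (hk : k ≫ kb = ka ≫ f)
    (ha : IsPullback (T.map ka) (T.map (0 : K ⟶ Z)) (T.map a) (T.map 0))
    (hb : IsPullback (T.map kb) (T.map (0 : L ⟶ Z)) (T.map b) (T.map 0))
    (haE : E (T.map a)) (hkE : E (T.map k)) : E (T.map f) := by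
  have kernel {K A : 𝒜} {k : K ⟶ A} {a : A ⟶ C}
      (h : IsPullback (T.map k) (T.map (0 : K ⟶ Z)) (T.map a) (T.map 0)) :
      ∃ w : T.map k ≫ T.map a = 0, Nonempty (IsLimit (KernelFork.ofι (T.map k) w)) := by
    have h₀ : T.map (0 : Z ⟶ C) = 0 := hZ.eq_of_src _ _
    rw [hZ.eq_of_tgt (T.map (0 : K ⟶ Z)) 0, h₀] at h
    have w : T.map k ≫ T.map a = 0 := by rw [h.w, comp_zero]
    exact ⟨w, (isPullback_zero_iff_isLimit_kernelFork hZ w).1 h⟩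
  obtain ⟨wa, hka⟩ := kernel ha
  obtain ⟨wb, hkb⟩ := kernel hb
  exact IsExtensionClass.middle _ _ _ _ _ _ (by rw [← hf, T.map_comp])
    (by rw [← T.map_comp, hk, T.map_comp]) wa wb hka hkb haE hkE

end ExtensionClass

namespace ExtObj

section Functors

variable {𝒟 : Type u} [Category.{v} 𝒟] (E : MorphismProperty 𝒟)

/-- The functor sending an extension to its domain. -/
@[simps] def domFunctor : ExtObj E ⥤ 𝒟 where
  obj a := a.dom
  map φ := φ.top

/-- The functor sending an extension to its codomain. -/
@[simps] def codFunctor : ExtObj E ⥤ 𝒟 where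
  obj a := a.cod
  map φ := φ.bot

/-- The extension itself, as a natural transformation from its domain to its codomain. -/
def homNatTrans : domFunctor E ⟶ codFunctor E where
  app a := a.hom
  naturality _ _ φ := φ.w

variable {E}

@[simp] theorem comp_top {a b c : ExtObj E} (φ : a ⟶ b) (ψ : b ⟶ c) :
    (φ ≫ ψ).top = φ.top ≫ ψ.top := rfl

@[simp] theorem comp_bot {a b c : ExtObj E} (φ : a ⟶ b) (ψ : b ⟶ c) :
    (φ ≫ ψ).bot = φ.bot ≫ ψ.bot := rfl

theorem hom_ext {a b : ExtObj E} {φ ψ : a ⟶ b} (ht : φ.top = ψ.top) (hb : φ.bot = ψ.bot) :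
    φ = ψ :=
  ExtHom.ext ht hb

instance {a b : ExtObj E} (φ : a ⟶ b) [IsIso φ] : IsIso φ.top :=
  (domFunctor E).map_isIso φ

instance {a b : ExtObj E} (φ : a ⟶ b) [IsIso φ] : IsIso φ.bot :=
  (codFunctor E).map_isIso φ

theorem isIso_of_isIso_top_of_isIso_bot {a b : ExtObj E} (φ : a ⟶ b) [IsIso φ.top]
    [IsIso φ.bot] : IsIso φ :=
  ⟨⟨inv φ.top, inv φ.bot, by simp [← φ.w]⟩,
    hom_ext (IsIso.hom_inv_id φ.top) (IsIso.hom_inv_id φ.bot),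
    hom_ext (IsIso.inv_hom_id φ.top) (IsIso.inv_hom_id φ.bot)⟩

theorem isPullback_of_isPullback_top_bot {a b c d : ExtObj E} {k : a ⟶ b} {l : a ⟶ c} {g : b ⟶ d}
    {h : c ⟶ d} (ht : IsPullback k.top l.top g.top h.top)
    (hb : IsPullback k.bot l.bot g.bot h.bot) : IsPullback k l g h := by
  refine IsPullback.mk' (hom_ext ht.w hb.w) (fun T φ ψ hk hl ↦ hom_ext
    (ht.hom_ext (congrArg ExtHom.top hk) (congrArg ExtHom.top hl))
    (hb.hom_ext (congrArg ExtHom.bot hk) (congrArg ExtHom.bot hl))) fun T x y hxy ↦ ?_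
  obtain ⟨t, htx, hty⟩ := ht.exists_lift x.top y.top (congrArg ExtHom.top hxy)
  obtain ⟨s, hsx, hsy⟩ := hb.exists_lift x.bot y.bot (congrArg ExtHom.bot hxy)
  refine ⟨⟨t, s, hb.hom_ext ?_ ?_⟩, hom_ext htx hsx, hom_ext hty hsy⟩
  · rw [Category.assoc, ← k.w, reassoc_of% htx, x.w, Category.assoc, hsx]
  · rw [Category.assoc, ← l.w, reassoc_of% hty, y.w, Category.assoc, hsy]

end Functors

section Kernels

variable {𝒟 : Type u} [Category.{v} 𝒟] [HasZeroMorphisms 𝒟] {E : MorphismProperty 𝒟}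
  {a b : ExtObj E}

theorem isZero_dom (ha : IsZero a) : IsZero a.dom :=
  (IsZero.iff_id_eq_zero _).2 (congrArg ExtHom.top ((IsZero.iff_id_eq_zero a).1 ha))

theorem isZero_cod (ha : IsZero a) : IsZero a.cod :=
  (IsZero.iff_id_eq_zero _).2 (congrArg ExtHom.bot ((IsZero.iff_id_eq_zero a).1 ha))

variable {Z Ka Kb : 𝒟} {ka : Ka ⟶ a.dom} {kb : Kb ⟶ b.dom}

theorem exists_isPullback_kernel_comparison {φ : a ⟶ b}
    (ha : IsPullback ka (0 : Ka ⟶ Z) a.hom 0) (hb : IsPullback kb (0 : Kb ⟶ Z) b.hom 0)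
    {k : Ka ⟶ Kb} (hk : k ≫ kb = ka ≫ φ.top) {P : 𝒟} {p₁ : P ⟶ a.cod} {p₂ : P ⟶ b.dom}
    (hP : IsPullback p₁ p₂ φ.bot b.hom) {l : a.dom ⟶ P} (h₁ : l ≫ p₁ = a.hom)
    (h₂ : l ≫ p₂ = φ.top) :
    ∃ kP : Kb ⟶ P, IsPullback kP (0 : Kb ⟶ Z) p₁ 0 ∧ IsPullback ka k l kP := by
  obtain ⟨kP, hk₁, hk₂⟩ := hP.exists_lift 0 kb (by rw [hb.w]; simp)
  have hkP : IsPullback kP (0 : Kb ⟶ Z) p₁ 0 :=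
    IsPullback.of_right (by simpa only [hk₂, zero_comp] using hb) (by simpa using hk₁) hP.flip
  refine ⟨kP, hkP, IsPullback.of_bot (by simpa only [h₁, comp_zero] using ha)
    (hP.hom_ext ?_ ?_) hkP⟩
  · simp [h₁, hk₁, ha.w]
  · simp [h₂, hk₂, hk]

variable [IsExtensionClass E]

/- The comparison is a morphism over `a.cod` which restricts on kernels to the map induced by `φ`:
this is the situation of (E5). -/
theorem isDoubleExt_iff (φ : a ⟶ b) (hZ : IsZero Z) (ha : IsPullback ka (0 : Ka ⟶ Z) a.hom 0)
    (hb : IsPullback kb (0 : Kb ⟶ Z) b.hom 0) {k : Ka ⟶ Kb} (hk : k ≫ kb = ka ≫ φ.top) :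
    IsDoubleExt φ ↔ E φ.bot ∧ E k := by
  constructor
  · rintro ⟨-, hbot, hl⟩
    have := E.hasPullback b.hom hbot
    have hP := IsPullback.of_hasPullback φ.bot b.hom
    have h₁ := hP.lift_fst a.hom φ.top φ.w.symm
    have h₂ := hP.lift_snd a.hom φ.top φ.w.symm
    obtain ⟨kP, -, hpb⟩ := exists_isPullback_kernel_comparison ha hb hk hP h₁ h₂
    exact ⟨hbot, E.of_isPullback hpb (hl _ _ hP _ h₁ h₂)⟩
  · rintro ⟨hbot, hk'⟩
    have mem_comparison {P : 𝒟} (p₁ : P ⟶ a.cod) (p₂ : P ⟶ b.dom)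
        (hP : IsPullback p₁ p₂ φ.bot b.hom) (l : a.dom ⟶ P) (h₁ : l ≫ p₁ = a.hom)
        (h₂ : l ≫ p₂ = φ.top) : E l := by
      obtain ⟨kP, hkP, hpb⟩ := exists_isPullback_kernel_comparison ha hb hk hP h₁ h₂
      exact IsExtensionClass.middle ka kP a.hom p₁ l k h₁ hpb.w.symm _ _
        ((isPullback_zero_iff_isLimit_kernelFork hZ (by simpa using ha.w)).1 ha)
        ((isPullback_zero_iff_isLimit_kernelFork hZ (by simpa using hkP.w)).1 hkP) a.mem hk'
    have := E.hasPullback b.hom hbot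
    have hP := IsPullback.of_hasPullback φ.bot b.hom
    refine ⟨?_, hbot, mem_comparison⟩
    rw [← hP.lift_snd a.hom φ.top φ.w.symm]
    exact E.comp_mem _ _ (mem_comparison _ _ hP _ (hP.lift_fst _ _ _) (hP.lift_snd _ _ _))
      (E.of_isPullback hP hbot)

end Kernels

variable {𝒟 : Type u} [Category.{v} 𝒟] [HasZeroMorphisms 𝒟] (E : MorphismProperty 𝒟)
  [IsExtensionClass E]

instance {T : 𝒟} (a : ExtObj E) (f : T ⟶ (codFunctor E).obj a) :
    HasPullback ((homNatTrans E).app a) f :=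
  E.hasPullback f a.mem

section Kernel

open ZeroObject

variable [HasZeroObject 𝒟]

/-- The inclusion of the zero object into the codomain of an extension. -/
noncomputable abbrev zeroToCod : (Functor.const (ExtObj E)).obj (0 : 𝒟) ⟶ codFunctor E := 0

/-- The functor sending an extension to its kernel, constructed as a pullback along the inclusion
of the zero object. -/
noncomputable def ker : ExtObj E ⥤ 𝒟 :=
  pullback (homNatTrans E) (zeroToCod E)

/-- The inclusion of the kernel of an extension into its domain. -/
noncomputable def kerι : ker E ⟶ domFunctor E :=
  pullback.fst (homNatTrans E) (zeroToCod E)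

variable {E}

theorem isPullback_kerι (a : ExtObj E) :
    IsPullback ((kerι E).app a) (0 : (ker E).obj a ⟶ 0) a.hom 0 := by
  have hsnd : (0 : (ker E).obj a ⟶ 0) = (pullback.snd (homNatTrans E) (zeroToCod E)).app a :=
    (isZero_zero 𝒟).eq_of_tgt _ _
  rw [hsnd]
  exact isPullback_app_pullback (homNatTrans E) (zeroToCod E) a

theorem isDoubleExt_iff_ker {a b : ExtObj E} {φ : a ⟶ b} :
    IsDoubleExt φ ↔ E φ.bot ∧ E ((ker E).map φ) :=
  isDoubleExt_iff φ (isZero_zero 𝒟) (isPullback_kerι a) (isPullback_kerι b)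
    ((kerι E).naturality φ)

theorem isPullback_ker_map {sq : Square (ExtObj E)} (ht : (sq.map (domFunctor E)).IsPullback)
    (hb : (sq.map (codFunctor E)).IsPullback) : (sq.map (ker E)).IsPullback :=
  isPullback_map_of_isPullback_app (isPullback_app_pullback (homNatTrans E) (zeroToCod E)) ht
    (isPullback_map_const 0 sq) hb

end Kernel

section Pullbacks

variable {E} {x y z : ExtObj E}

/- `S` is both the pullback of `x.hom` along `π₀` and that of `φ.top` along the codomain `Q` of the
comparison of `ψ`, and `P ⟶ S` is a base change of that comparison. -/
theorem mem_of_isPullback {φ : x ⟶ z} {ψ : y ⟶ z} (hψ : IsDoubleExt ψ) {P P₀ : 𝒟}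
    {p₁ : P ⟶ x.dom} {p₂ : P ⟶ y.dom} {π₁ : P₀ ⟶ x.cod} {π₂ : P₀ ⟶ y.cod}
    (hP : IsPullback p₁ p₂ φ.top ψ.top) (hP₀ : IsPullback π₁ π₂ φ.bot ψ.bot)
    {p : P ⟶ P₀} (h₁ : p ≫ π₁ = p₁ ≫ x.hom) (h₂ : p ≫ π₂ = p₂ ≫ y.hom) : E p := by
  obtain ⟨-, hbot, hcomp⟩ := hψ
  have := E.hasPullback z.hom hbot
  have hQ := IsPullback.of_hasPullback ψ.bot z.hom
  have hl := hcomp _ _ hQ _ (hQ.lift_fst y.hom ψ.top ψ.w.symm) (hQ.lift_snd _ _ _)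
  set l := hQ.lift y.hom ψ.top ψ.w.symm with l_def
  have := E.hasPullback π₁ x.mem
  have hS := IsPullback.of_hasPullback x.hom π₁
  obtain ⟨t, ht₁, ht₂⟩ := hQ.exists_lift (pullback.snd x.hom π₁ ≫ π₂)
    (pullback.fst x.hom π₁ ≫ φ.top)
    (by simp only [Category.assoc, φ.w, ← hP₀.w, hS.w_assoc])
  have hSQ : IsPullback (pullback.fst x.hom π₁) t φ.top (pullback.snd ψ.bot z.hom) :=
    (IsPullback.of_right (by simpa only [ht₁, φ.w] using hS.flip.paste_horiz hP₀.flip) ht₂ hQ).flip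
  obtain ⟨m, hm₁, hm₂⟩ := hS.exists_lift p₁ p h₁.symm
  have hm : IsPullback m p₂ t l := IsPullback.of_right
    (by simpa only [hm₁, l_def, hQ.lift_snd] using hP)
    (hQ.hom_ext (by simp [ht₁, reassoc_of% hm₂, h₂, l_def])
      (by simp [ht₂, reassoc_of% hm₁, hP.w, l_def])) hSQ
  rw [← hm₂]
  exact E.comp_mem _ _ (E.of_isPullback hm.flip hl) (E.of_isPullback hS x.mem)

theorem exists_isPullback_top_bot (φ : x ⟶ z) {ψ : y ⟶ z} (hψ : IsDoubleExt ψ) :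
    ∃ (p : ExtObj E) (p₁ : p ⟶ x) (p₂ : p ⟶ y),
      IsPullback p₁.top p₂.top φ.top ψ.top ∧ IsPullback p₁.bot p₂.bot φ.bot ψ.bot := by
  have := E.hasPullback φ.top hψ.1
  have := E.hasPullback φ.bot hψ.2.1
  have htop := (IsPullback.of_hasPullback ψ.top φ.top).flip
  have hbot := (IsPullback.of_hasPullback ψ.bot φ.bot).flip
  obtain ⟨p, hp₁, hp₂⟩ := hbot.exists_lift (pullback.snd ψ.top φ.top ≫ x.hom)
    (pullback.fst ψ.top φ.top ≫ y.hom)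
    (by simp only [Category.assoc, ← φ.w, ← ψ.w, htop.w_assoc])
  exact ⟨⟨_, _, p, mem_of_isPullback hψ htop hbot hp₁ hp₂⟩, ⟨_, _, hp₁.symm⟩, ⟨_, _, hp₂.symm⟩,
    htop, hbot⟩

theorem isPullback_top_and_isPullback_bot {w : ExtObj E} {k : w ⟶ x} {l : w ⟶ y} {φ : x ⟶ z}
    {ψ : y ⟶ z} (hψ : IsDoubleExt ψ) (h : IsPullback k l φ ψ) :
    IsPullback k.top l.top φ.top ψ.top ∧ IsPullback k.bot l.bot φ.bot ψ.bot := by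
  obtain ⟨p, p₁, p₂, htop, hbot⟩ := exists_isPullback_top_bot φ hψ
  let e := (isPullback_of_isPullback_top_bot htop hbot).isoIsPullback _ _ h
  have h₁ : p₁ = e.hom ≫ k := (IsPullback.isoIsPullback_hom_fst ..).symm
  have h₂ : p₂ = e.hom ≫ l := (IsPullback.isoIsPullback_hom_snd ..).symm
  constructor
  · exact htop.of_iso ((domFunctor E).mapIso e) (Iso.refl _) (Iso.refl _) (Iso.refl _)
      (by simp [h₁]) (by simp [h₂]) (by simp) (by simp)
  · exact hbot.of_iso ((codFunctor E).mapIso e) (Iso.refl _) (Iso.refl _) (Iso.refl _)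
      (by simp [h₁]) (by simp [h₂]) (by simp) (by simp)

theorem isPullback_kernel {k a b z : ExtObj E} (hz : IsZero z) {ι : k ⟶ a} {φ : a ⟶ b}
    (hφ : IsDoubleExt φ) (hι : ι ≫ φ = 0) (h : Nonempty (IsLimit (KernelFork.ofι ι hι))) :
    IsPullback ι.top (0 : k.dom ⟶ z.dom) φ.top 0 ∧ IsPullback ι.bot (0 : k.cod ⟶ z.cod) φ.bot 0 :=
  have h := isPullback_top_and_isPullback_bot hφ
    ((isPullback_zero_iff_isLimit_kernelFork hz hι).2 h).flip
  ⟨h.1.flip, h.2.flip⟩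

end Pullbacks

section DoubleExtensions

variable [HasZeroObject 𝒟]

instance : HasZeroObject (ExtObj E) := by
  obtain ⟨Z, hZ⟩ := HasZeroObject.zero (C := 𝒟)
  exact ⟨⟨Z, Z, 𝟙 Z, E.id_mem Z⟩,
    ⟨fun a ↦ ⟨⟨⟨0⟩, fun φ ↦ hom_ext (hZ.eq_of_src _ _) (hZ.eq_of_src _ _)⟩⟩,
      fun a ↦ ⟨⟨⟨0⟩, fun φ ↦ hom_ext (hZ.eq_of_tgt _ _) (hZ.eq_of_tgt _ _)⟩⟩⟩⟩

variable {E}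

theorem isZero_ker {a : ExtObj E} (ha : IsZero a) : IsZero ((ker E).obj a) :=
  (IsZero.iff_id_eq_zero _).2 ((isPullback_kerι a).hom_ext ((isZero_dom ha).eq_of_tgt _ _)
    ((isZero_zero 𝒟).eq_of_tgt _ _))

instance : IsExtensionClass (DoubleExtClass E) where
  id_mem a := isDoubleExt_iff_ker.2 ⟨E.id_mem _, by simpa using E.id_mem _⟩
  comp_mem φ ψ hφ hψ := by
    have hφ := isDoubleExt_iff_ker.1 hφ
    have hψ := isDoubleExt_iff_ker.1 hψ
    exact isDoubleExt_iff_ker.2 ⟨E.comp_mem _ _ hφ.1 hψ.1,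
      by simpa using E.comp_mem _ _ hφ.2 hψ.2⟩
  of_isPullback {x y p z f g k l} sq hg := by
    obtain ⟨htop, hbot⟩ := isPullback_top_and_isPullback_bot hg sq.flip
    have hg := isDoubleExt_iff_ker.1 hg
    exact isDoubleExt_iff_ker.2 ⟨E.of_isPullback hbot.flip hg.1, E.of_isPullback
      (isPullback_ker_map (sq := ⟨k, l, g, f, sq.w⟩) htop.flip hbot.flip) hg.2⟩
  hasPullback φ hψ :=
    have ⟨_, _, _, htop, hbot⟩ := exists_isPullback_top_bot φ hψ
    (isPullback_of_isPullback_top_bot htop hbot).flip.hasPullback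
  right_of_comp φ ψ h := by
    have h := isDoubleExt_iff_ker.1 h
    exact isDoubleExt_iff_ker.2 ⟨IsExtensionClass.right_of_comp φ.bot _ h.1,
      IsExtensionClass.right_of_comp ((ker E).map φ) _ (by simpa using h.2)⟩
  middle {k l a b c} ka kb φ ψ f g hf hg hka hkb ha hb hφ hg' := by
    have hψ : IsDoubleExt ψ := isDoubleExt_iff_ker.2 (by
      have h := isDoubleExt_iff_ker.1 hφ
      exact ⟨IsExtensionClass.right_of_comp f.bot _ (by simpa [← hf] using h.1),
        IsExtensionClass.right_of_comp ((ker E).map f) _ (by simpa [← hf] using h.2)⟩)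
    obtain ⟨z, hz⟩ := HasZeroObject.zero (C := ExtObj E)
    obtain ⟨hat, hab⟩ := isPullback_kernel hz hφ hka ha
    obtain ⟨hbt, hbb⟩ := isPullback_kernel hz hψ hkb hb
    have hφ := isDoubleExt_iff_ker.1 hφ
    have hg' := isDoubleExt_iff_ker.1 hg'
    refine isDoubleExt_iff_ker.2 ⟨mem_map_of_isPullback_kernel (codFunctor E) (isZero_cod hz) hf hg
      hab hbb hφ.1 hg'.1, mem_map_of_isPullback_kernel (ker E) (isZero_ker hz) hf hg
      (isPullback_ker_map (sq := ⟨ka, (0 : k ⟶ z), φ, 0, by simp [hka]⟩) hat hab)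
      (isPullback_ker_map (sq := ⟨kb, (0 : l ⟶ z), ψ, 0, by simp [hkb]⟩) hbt hbb) hφ.2 hg'.2⟩

theorem splitShortFive (h : SplitShortFive 𝒟) : SplitShortFive (ExtObj E) := by
  intro K A B K' A' B' k f s k' f' s' u v w hs hs' hk hk' hker hker' huk hvf _ _
  obtain ⟨z, hz⟩ := HasZeroObject.zero (C := ExtObj E)
  obtain ⟨ht, hb⟩ := isPullback_kernel hz (mem_of_section (DoubleExtClass E) hs) hk hker
  obtain ⟨ht', hb'⟩ := isPullback_kernel hz (mem_of_section (DoubleExtClass E) hs') hk' hker'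
  have htop : IsIso v.top := h k.top f.top s.top k'.top f'.top s'.top u.top v.top w.top
    (congrArg ExtHom.top hs) (congrArg ExtHom.top hs') (congrArg ExtHom.top hk)
    (congrArg ExtHom.top hk')
    ((isPullback_zero_iff_isLimit_kernelFork (isZero_dom hz) _).1 ht)
    ((isPullback_zero_iff_isLimit_kernelFork (isZero_dom hz) _).1 ht')
    (congrArg ExtHom.top huk) (congrArg ExtHom.top hvf) inferInstance inferInstance
  have hbot : IsIso v.bot := h k.bot f.bot s.bot k'.bot f'.bot s'.bot u.bot v.bot w.bot
    (congrArg ExtHom.bot hs) (congrArg ExtHom.bot hs') (congrArg ExtHom.bot hk)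
    (congrArg ExtHom.bot hk')
    ((isPullback_zero_iff_isLimit_kernelFork (isZero_cod hz) _).1 hb)
    ((isPullback_zero_iff_isLimit_kernelFork (isZero_cod hz) _).1 hb')
    (congrArg ExtHom.bot huk) (congrArg ExtHom.bot hvf) inferInstance inferInstance
  exact isIso_of_isIso_top_of_isIso_bot v

end DoubleExtensions

end ExtObj

section Descent

variable {𝒟 : Type u} [Category.{v} 𝒟]

theorem isRegularEpi_of_exists_desc {A B P : 𝒟} {f : A ⟶ B} [Epi f] {p₁ p₂ : P ⟶ A}
    (w : p₁ ≫ f = p₂ ≫ f) (h : ∀ {C : 𝒟} (k : A ⟶ C), p₁ ≫ k = p₂ ≫ k → ∃ m, f ≫ m = k) :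
    IsRegularEpi f :=
  ⟨⟨⟨P, p₁, p₂, w, Cofork.IsColimit.mk _ (fun s ↦ (h s.π s.condition).choose)
    (fun s ↦ (h s.π s.condition).choose_spec)
    fun s m hm ↦ by rw [← cancel_epi f, (h s.π s.condition).choose_spec]; exact hm⟩⟩⟩

/-- A descent datum on `w : W ⟶ A` relative to `f : A ⟶ B`: an action of the kernel pair of `f`
on `W`. In terms of generalised elements, `act` sends a pair `(x, a)` with `f (w x) = f a` to an
element of `W` over `a`. -/
structure DescentDatum {A B W : 𝒟} (f : A ⟶ B) (w : W ⟶ A) where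
  D : 𝒟
  fst : D ⟶ W
  snd : D ⟶ A
  isPullback : IsPullback fst snd (w ≫ f) f
  act : D ⟶ W
  act_comp : act ≫ w = snd
  act_unit : ∀ {T : 𝒟} (d : T ⟶ D), d ≫ snd = d ≫ fst ≫ w → d ≫ act = d ≫ fst
  act_act : ∀ {T : 𝒟} {d d' e : T ⟶ D}, d' ≫ fst = d ≫ act → e ≫ fst = d ≫ fst →
    e ≫ snd = d' ≫ snd → d' ≫ act = e ≫ act

namespace DescentDatum

/-- A descent datum from its unit and associativity laws at universal elements: `D₂` consists of
triples `(x, a, b)`, `u` sends `x` to `(x, w x)`, and `m` and `n` send `(x, a, b)` to `(x, b)` and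
`(act (x, a), b)`. -/
def mk' {A B W D D₂ : 𝒟} {f : A ⟶ B} {w : W ⟶ A} {fst : D ⟶ W} {snd : D ⟶ A} {act : D ⟶ W}
    {p : D₂ ⟶ D} {b : D₂ ⟶ A} {u : W ⟶ D} {m n : D₂ ⟶ D} (hD : IsPullback fst snd (w ≫ f) f)
    (hD₂ : IsPullback p b (snd ≫ f) f) (act_comp : act ≫ w = snd) (hu₁ : u ≫ fst = 𝟙 W)
    (hu₂ : u ≫ snd = w) (hm₁ : m ≫ fst = p ≫ fst) (hm₂ : m ≫ snd = b) (hn₁ : n ≫ fst = p ≫ act)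
    (hn₂ : n ≫ snd = b) (unit : u ≫ act = 𝟙 W) (assoc : m ≫ act = n ≫ act) :
    DescentDatum f w where
  D := D
  fst := fst
  snd := snd
  isPullback := hD
  act := act
  act_comp := act_comp
  act_unit d hd := by
    have hdu : d = d ≫ fst ≫ u := hD.hom_ext
      (by simp only [Category.assoc, hu₁, Category.comp_id])
      (by simp only [Category.assoc, hu₂, hd])
    nth_rw 1 [hdu]
    simp only [Category.assoc, unit, Category.comp_id]
  act_act {T d d' e} h₁ h₂ h₃ := by
    obtain ⟨t, htp, htb⟩ := hD₂.exists_lift d (d' ≫ snd) (by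
      rw [Category.assoc, ← hD.w, reassoc_of% h₁, reassoc_of% act_comp, hD.w])
    have he : e = t ≫ m := hD.hom_ext (by rw [h₂, Category.assoc, hm₁, reassoc_of% htp])
      (by rw [h₃, Category.assoc, hm₂, htb])
    have hd' : d' = t ≫ n := hD.hom_ext (by rw [h₁, Category.assoc, hn₁, reassoc_of% htp])
      (by rw [Category.assoc, hn₂, htb])
    rw [he, hd', Category.assoc, Category.assoc, assoc]

/-- The canonical descent datum on a base change of `z` along `f`, whose effectiveness is witnessed
by `z`. -/
noncomputable def ofIsPullback {A B W Z D : 𝒟} {f : A ⟶ B} {w : W ⟶ A} {q : W ⟶ Z} {z : Z ⟶ B}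
    {fst : D ⟶ W} {snd : D ⟶ A} (h : IsPullback q w z f) (hD : IsPullback fst snd (w ≫ f) f) :
    DescentDatum f w where
  D := D
  fst := fst
  snd := snd
  isPullback := hD
  act := h.lift (fst ≫ q) snd (by rw [Category.assoc, h.w, hD.w])
  act_comp := h.lift_snd _ _ _
  act_unit d hd := h.hom_ext (by simp) (by simpa using hd)
  act_act {T d d' e} h₁ h₂ h₃ := h.hom_ext
    (by simp [reassoc_of% h₁, reassoc_of% h₂]) (by simpa using h₃.symm)

theorem isPullback_comparison {A B W W' D D' : 𝒟} {f : A ⟶ B} {w : W ⟶ A} {w' : W' ⟶ A}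
    {fst : D ⟶ W} {snd : D ⟶ A} {fst' : D' ⟶ W'} {snd' : D' ⟶ A}
    (hD : IsPullback fst snd (w ≫ f) f) (hD' : IsPullback fst' snd' (w' ≫ f) f) {g : W ⟶ W'}
    (hg : g ≫ w' = w) {t : D ⟶ D'} (ht₁ : t ≫ fst' = fst ≫ g) (ht₂ : t ≫ snd' = snd) :
    IsPullback t fst fst' g :=
  IsPullback.of_right (by simpa only [ht₂, reassoc_of% hg] using hD.flip) ht₁ hD'.flip

variable {A B W : 𝒟} {f : A ⟶ B} {w : W ⟶ A} (δ : DescentDatum f w)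

theorem act_eq_id {u : W ⟶ δ.D} (h₁ : u ≫ δ.fst = 𝟙 W) (h₂ : u ≫ δ.snd = w) :
    u ≫ δ.act = 𝟙 W := by
  rw [δ.act_unit u (by rw [h₂, reassoc_of% h₁]), h₁]

theorem fst_comp_comp_eq_act_comp_comp {K C : 𝒟} {p₁ p₂ : K ⟶ A} (hK : IsKernelPair f p₁ p₂)
    {s : A ⟶ C} (h : p₁ ≫ s = p₂ ≫ s) : δ.fst ≫ w ≫ s = δ.act ≫ w ≫ s := by
  obtain ⟨e, he₁, he₂⟩ := hK.exists_lift (δ.fst ≫ w) δ.snd (by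
    rw [Category.assoc, δ.isPullback.w])
  rw [reassoc_of% δ.act_comp, ← he₂, ← Category.assoc, ← he₁, Category.assoc, h, Category.assoc]

/-- The same descent datum, with another choice of the pullback of `w ≫ f` and `f`. -/
noncomputable def copy {D : 𝒟} {fst : D ⟶ W} {snd : D ⟶ A}
    (hD : IsPullback fst snd (w ≫ f) f) : DescentDatum f w where
  D := D
  fst := fst
  snd := snd
  isPullback := hD
  act := (hD.isoIsPullback _ _ δ.isPullback).hom ≫ δ.act
  act_comp := by rw [Category.assoc, δ.act_comp, IsPullback.isoIsPullback_hom_snd]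
  act_unit d hd := by
    rw [← Category.assoc, δ.act_unit, Category.assoc, IsPullback.isoIsPullback_hom_fst]
    simpa only [Category.assoc, IsPullback.isoIsPullback_hom_fst_assoc,
      IsPullback.isoIsPullback_hom_snd] using hd
  act_act {T d d' e} h₁ h₂ h₃ := by
    rw [← Category.assoc, ← Category.assoc]
    apply δ.act_act (d := d ≫ (hD.isoIsPullback _ _ δ.isPullback).hom) <;>
      simpa only [Category.assoc, IsPullback.isoIsPullback_hom_fst,
        IsPullback.isoIsPullback_hom_snd]

/-- The image of a descent datum under a functor preserving the pullback `δ.D` and the pullback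
of composable pairs of the action. -/
noncomputable def map {𝒞 : Type*} [Category 𝒞] (F : 𝒟 ⥤ 𝒞) {S : 𝒟} {s t : S ⟶ δ.D}
    (hS : IsPullback s t δ.act δ.fst)
    (hFS : IsPullback (F.map s) (F.map t) (F.map δ.act) (F.map δ.fst))
    (hFD : IsPullback (F.map δ.fst) (F.map δ.snd) (F.map w ≫ F.map f) (F.map f)) :
    DescentDatum (F.map f) (F.map w) :=
  have hu₁ : δ.isPullback.lift (𝟙 W) w (Category.id_comp _) ≫ δ.fst = 𝟙 W :=
    δ.isPullback.lift_fst _ _ _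
  have hu₂ : δ.isPullback.lift (𝟙 W) w (Category.id_comp _) ≫ δ.snd = w :=
    δ.isPullback.lift_snd _ _ _
  have hm : (s ≫ δ.fst) ≫ w ≫ f = (t ≫ δ.snd) ≫ f := by
    rw [Category.assoc, Category.assoc, ← δ.isPullback.w, ← hS.w_assoc,
      reassoc_of% δ.act_comp, δ.isPullback.w]
  have hm₁ : δ.isPullback.lift _ _ hm ≫ δ.fst = s ≫ δ.fst := δ.isPullback.lift_fst _ _ _
  have hm₂ : δ.isPullback.lift _ _ hm ≫ δ.snd = t ≫ δ.snd := δ.isPullback.lift_snd _ _ _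
  .mk' (p := F.map s) (b := F.map t ≫ F.map δ.snd) (u := F.map (δ.isPullback.lift _ _ _))
    (m := F.map (δ.isPullback.lift _ _ hm)) (n := F.map t) hFD
    (by simpa only [← F.map_comp_assoc, δ.act_comp] using hFS.paste_vert hFD)
    (by rw [← F.map_comp, δ.act_comp]) (by rw [← F.map_comp, hu₁, F.map_id])
    (by rw [← F.map_comp, hu₂]) (by rw [← F.map_comp, hm₁, F.map_comp])
    (by rw [← F.map_comp, hm₂, F.map_comp]) (by rw [← F.map_comp, ← F.map_comp, hS.w]) rfl
    (by rw [← F.map_comp, δ.act_eq_id hu₁ hu₂, F.map_id])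
    (by rw [← F.map_comp, ← F.map_comp, δ.act_act hS.w.symm hm₁ hm₂])

/-- The descent datum `δ` is effective, witnessed by `z`: it exhibits `w` as the base change of
`z` along `f`, with projection `q`. -/
structure Descends {Z : 𝒟} (z : Z ⟶ B) (q : W ⟶ Z) : Prop where
  isPullback : IsPullback q w z f
  fst_comp : δ.fst ≫ q = δ.act ≫ q

variable {δ}

theorem descends_ofIsPullback {Z D : 𝒟} {q : W ⟶ Z} {z : Z ⟶ B} {fst : D ⟶ W} {snd : D ⟶ A}
    (h : IsPullback q w z f) (hD : IsPullback fst snd (w ≫ f) f) :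
    (ofIsPullback h hD).Descends z q :=
  ⟨h, (h.lift_fst _ _ _).symm⟩

theorem Descends.isKernelPair {Z : 𝒟} {z : Z ⟶ B} {q : W ⟶ Z} (h : δ.Descends z q) :
    IsKernelPair q δ.fst δ.act := by
  exact IsPullback.of_bot (by simpa only [δ.act_comp, h.isPullback.w] using δ.isPullback) h.fst_comp
    h.isPullback

theorem Descends.of_copy {D Z : 𝒟} {fst : D ⟶ W} {snd : D ⟶ A}
    {hD : IsPullback fst snd (w ≫ f) f} {z : Z ⟶ B} {q : W ⟶ Z}
    (h : (δ.copy hD).Descends z q) : δ.Descends z q where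
  isPullback := h.isPullback
  fst_comp := by
    have := h.fst_comp
    rw [← cancel_epi (hD.isoIsPullback _ _ δ.isPullback).hom, ← Category.assoc,
      IsPullback.isoIsPullback_hom_fst, ← Category.assoc]
    exact this

theorem Descends.of_iso {W' Z : 𝒟} {w' : W' ⟶ A} {δ' : DescentDatum f w'} {z : Z ⟶ B}
    {q : W' ⟶ Z} (h : δ'.Descends z q) (e : W ≅ W') (he : e.hom ≫ w' = w) {t : δ.D ⟶ δ'.D}
    (ht : t ≫ δ'.fst = δ.fst ≫ e.hom) (hact : t ≫ δ'.act = δ.act ≫ e.hom) :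
    δ.Descends z (e.hom ≫ q) where
  isPullback := .of_iso h.isPullback e.symm (.refl _) (.refl _) (.refl _) (by simp) (by simp [← he])
    (by simp) (by simp)
  fst_comp := by rw [← reassoc_of% ht, h.fst_comp, reassoc_of% hact]

theorem Descends.act_comm {W' Z : 𝒟} {w' : W' ⟶ A} {δ' : DescentDatum f w'} {z : Z ⟶ B}
    {q : W' ⟶ Z} (h : δ'.Descends z q) {g : W ⟶ W'} (hg : g ≫ w' = w) {t : δ.D ⟶ δ'.D}
    (ht₁ : t ≫ δ'.fst = δ.fst ≫ g) (ht₂ : t ≫ δ'.snd = δ.snd)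
    (hq : δ.fst ≫ g ≫ q = δ.act ≫ g ≫ q) : t ≫ δ'.act = δ.act ≫ g := by
  refine h.isPullback.hom_ext ?_ ?_
  · rw [Category.assoc, Category.assoc, ← h.fst_comp, reassoc_of% ht₁, hq]
  · rw [Category.assoc, Category.assoc, δ'.act_comp, hg, δ.act_comp, ht₂]

end DescentDatum

/-- Morphisms of the class `E` are regular epimorphisms, and every descent datum of `E` along them
is effective. For extension classes, this is an elementary form of (M), see
`axM_iff_hasEffectiveDescent`. -/
class HasEffectiveDescent (E : MorphismProperty 𝒟) : Prop where
  isRegularEpi {A B : 𝒟} (f : A ⟶ B) : E f → IsRegularEpi f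
  exists_descends {A B W : 𝒟} {f : A ⟶ B} {w : W ⟶ A} (δ : DescentDatum f w) : E f → E w →
    ∃ (Z : 𝒟) (z : Z ⟶ B) (q : W ⟶ Z), E z ∧ δ.Descends z q

section HasEffectiveDescent

variable {E : MorphismProperty 𝒟} [HasEffectiveDescent E]

theorem epi_of_mem {A B : 𝒟} {f : A ⟶ B} (hf : E f) : Epi f :=
  have := HasEffectiveDescent.isRegularEpi f hf
  inferInstance

theorem DescentDatum.Descends.exists_desc [E.IsStableUnderBaseChange] {A B W : 𝒟} {f : A ⟶ B}
    {w : W ⟶ A} {δ : DescentDatum f w} (hf : E f) {Z : 𝒟} {z : Z ⟶ B} {q : W ⟶ Z}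
    (h : δ.Descends z q) {C : 𝒟} (k : W ⟶ C) (hk : δ.fst ≫ k = δ.act ≫ k) : ∃ m, q ≫ m = k :=
  have := HasEffectiveDescent.isRegularEpi q (E.of_isPullback h.isPullback.flip hf)
  IsRegularEpi.exists_of_isKernelPair q h.isKernelPair k hk

theorem DescentDatum.Descends.exists_desc_of_act_comm [E.IsStableUnderBaseChange]
    {A B W W' : 𝒟} {f : A ⟶ B} {w : W ⟶ A} {w' : W' ⟶ A} {δ : DescentDatum f w}
    {δ' : DescentDatum f w'} (hf : E f) {Z Z' : 𝒟} {z : Z ⟶ B} {q : W ⟶ Z} {z' : Z' ⟶ B}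
    {q' : W' ⟶ Z'} (h : δ.Descends z q) (h' : δ'.Descends z' q') {g : W ⟶ W'} (hg : g ≫ w' = w)
    {t : δ.D ⟶ δ'.D} (ht : t ≫ δ'.fst = δ.fst ≫ g) (hact : t ≫ δ'.act = δ.act ≫ g) :
    ∃ m, q ≫ m = g ≫ q' ∧ m ≫ z' = z := by
  obtain ⟨m, hm⟩ := h.exists_desc hf (g ≫ q') (by
    rw [← reassoc_of% ht, h'.fst_comp, reassoc_of% hact])
  have := epi_of_mem (E.of_isPullback h.isPullback.flip hf)
  exact ⟨m, hm, by rw [← cancel_epi q, reassoc_of% hm, h'.isPullback.w, reassoc_of% hg,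
    h.isPullback.w]⟩

/-- The descent datum induced on a quotient `c : W ⟶ W'` in the class `E` by a compatible
action. -/
def DescentDatum.quotient [E.IsStableUnderBaseChange] [E.HasPullbacks] {A B W W' D' : 𝒟}
    {f : A ⟶ B} {w : W ⟶ A} {w' : W' ⟶ A} (δ : DescentDatum f w) {c : W ⟶ W'} (hc : E c)
    (hcw : c ≫ w' = w) {fst : D' ⟶ W'} {snd : D' ⟶ A} (hD' : IsPullback fst snd (w' ≫ f) f)
    {act : D' ⟶ W'} (act_comp : act ≫ w' = snd) {t : δ.D ⟶ D'} (ht₁ : t ≫ fst = δ.fst ≫ c)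
    (ht₂ : t ≫ snd = δ.snd) (hact : t ≫ act = δ.act ≫ c) : DescentDatum f w' :=
  have ht : E t := E.of_isPullback (isPullback_comparison δ.isPullback hD' hcw ht₁ ht₂).flip hc
  have cover {T : 𝒟} (d : T ⟶ D') :
      ∃ (T' : 𝒟) (r : T' ⟶ T) (k : T' ⟶ δ.D), Epi r ∧ k ≫ t = r ≫ d :=
    have := E.hasPullback d ht
    have h := IsPullback.of_hasPullback t d
    ⟨_, _, _, epi_of_mem (E.of_isPullback h ht), h.w⟩
  { D := D'
    fst := fst
    snd := snd
    isPullback := hD'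
    act := act
    act_comp := act_comp
    act_unit {T} d hd := by
      obtain ⟨T', r, k, _, hk⟩ := cover d
      have hkact := δ.act_unit k (by
        rw [← ht₂, reassoc_of% hk, hd, ← reassoc_of% hk, reassoc_of% ht₁, hcw])
      rw [← cancel_epi r, ← reassoc_of% hk, hact, reassoc_of% hkact, ← ht₁, reassoc_of% hk]
    act_act {T d d' e} h₁ h₂ h₃ := by
      obtain ⟨T', r, k, _, hk⟩ := cover d
      have lift (x : T ⟶ D') (y : T' ⟶ W) (hy : y ≫ c = r ≫ x ≫ fst) :
          ∃ k' : T' ⟶ δ.D, k' ≫ δ.fst = y ∧ k' ≫ δ.snd = r ≫ x ≫ snd ∧ k' ≫ t = r ≫ x := by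
        obtain ⟨k', hk₁, hk₂⟩ := δ.isPullback.exists_lift y (r ≫ x ≫ snd) (by
          rw [← hcw, Category.assoc, reassoc_of% hy, hD'.w, Category.assoc, Category.assoc])
        exact ⟨k', hk₁, hk₂, hD'.hom_ext (by rw [Category.assoc, ht₁, reassoc_of% hk₁, hy,
          Category.assoc]) (by rw [Category.assoc, ht₂, hk₂, Category.assoc])⟩
      obtain ⟨k₁, h₁f, h₁s, h₁t⟩ := lift d' (k ≫ δ.act) (by
        rw [Category.assoc, ← hact, reassoc_of% hk, h₁])
      obtain ⟨k₂, h₂f, h₂s, h₂t⟩ := lift e (k ≫ δ.fst) (by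
        rw [Category.assoc, ← ht₁, reassoc_of% hk, h₂])
      have hk₁₂ := δ.act_act h₁f h₂f (by rw [h₁s, h₂s, h₃])
      rw [← cancel_epi r, ← reassoc_of% h₁t, ← reassoc_of% h₂t, hact, reassoc_of% hk₁₂] }

/- A cocone under `g` and `q` is invariant under the action of `δ`, hence, `t` being an
epimorphism, under that of `δ'`. -/
theorem DescentDatum.Descends.exists_isPushout_of_act_comm [E.IsStableUnderBaseChange]
    {A B W W' : 𝒟} {f : A ⟶ B} {w : W ⟶ A} {w' : W' ⟶ A} {δ : DescentDatum f w}
    {δ' : DescentDatum f w'} (hf : E f) {Z Z' : 𝒟} {z : Z ⟶ B} {q : W ⟶ Z} {z' : Z' ⟶ B}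
    {q' : W' ⟶ Z'} (h : δ.Descends z q) (h' : δ'.Descends z' q') {g : W ⟶ W'} (hgE : E g)
    (hg : g ≫ w' = w) {t : δ.D ⟶ δ'.D} (ht₁ : t ≫ δ'.fst = δ.fst ≫ g)
    (ht₂ : t ≫ δ'.snd = δ.snd) (hact : t ≫ δ'.act = δ.act ≫ g) :
    ∃ m, IsPushout g q q' m ∧ m ≫ z' = z := by
  obtain ⟨m, hm, hmz⟩ := h.exists_desc_of_act_comm hf h' hg ht₁ hact
  have := epi_of_mem (E.of_isPullback h.isPullback.flip hf)
  have := epi_of_mem (E.of_isPullback h'.isPullback.flip hf)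
  have := epi_of_mem (E.of_isPullback
    (isPullback_comparison δ.isPullback δ'.isPullback hg ht₁ ht₂).flip hgE)
  refine ⟨m, IsPushout.mk' hm.symm (fun T φ ψ hφ _ ↦ by rwa [← cancel_epi q'])
    fun T k l hkl ↦ ?_, hmz⟩
  obtain ⟨n, hn⟩ := h'.exists_desc hf k (by
    rw [← cancel_epi t, reassoc_of% ht₁, reassoc_of% hact, hkl, reassoc_of% h.fst_comp])
  exact ⟨n, hn, by rw [← cancel_epi q, reassoc_of% hm, hn, hkl]⟩

/- `xt` and `xt ≫ u` are base changes of `f` with the same kernel pair. -/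
theorem isIso_of_isPullback_of_isPullback [E.IsStableUnderBaseChange] [E.HasPullbacks]
    {A B X Y X' : 𝒟} {f : A ⟶ B} (hf : E f) {x : X ⟶ B} {y : Y ⟶ B} {u : X ⟶ Y} (hu : u ≫ y = x)
    {xt : X' ⟶ X} {xa : X' ⟶ A} (hx : IsPullback xt xa x f) (hy : IsPullback (xt ≫ u) xa y f) :
    IsIso u := by
  have hxt : E xt := E.of_isPullback hx.flip hf
  have hyt : E (xt ≫ u) := E.of_isPullback hy.flip hf
  have := epi_of_mem hxt
  have := epi_of_mem hyt
  have := HasEffectiveDescent.isRegularEpi _ hyt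
  have := E.hasPullback (xt ≫ u) hyt
  have hK := IsKernelPair.of_hasPullback (xt ≫ u)
  obtain ⟨v, hv⟩ := IsRegularEpi.exists_of_isKernelPair _ hK xt (by
    have hKy := congrArg (· ≫ y) hK.w
    simp only [Category.assoc, hu] at hKy
    obtain ⟨t, ht, hta⟩ := hx.exists_lift (pullback.fst (xt ≫ u) (xt ≫ u) ≫ xt)
      (pullback.snd (xt ≫ u) (xt ≫ u) ≫ xa) (by
        rw [Category.assoc, Category.assoc, ← hx.w, hKy])
    have hsnd : t = pullback.snd (xt ≫ u) (xt ≫ u) := hy.hom_ext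
      (by rw [reassoc_of% ht, hK.w]) hta
    rw [← ht, hsnd])
  refine ⟨v, ?_, ?_⟩
  · rw [← cancel_epi xt, ← Category.assoc, hv, Category.comp_id]
  · rw [← cancel_epi (xt ≫ u), ← Category.assoc, hv, Category.comp_id]

/- The pullback `V` of the cospan in `Z` has the same base change along `α.τ₁` as `Z.X₁`. -/
theorem isPullback_of_isPullback_baseChange [E.IsStableUnderBaseChange] [E.HasPullbacks]
    {T A Z B : Square 𝒟} {w : T ⟶ Z} {τ : T ⟶ A} {ζ : Z ⟶ B} {α : A ⟶ B} (hα : E α.τ₁)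
    (h₁ : IsPullback w.τ₁ τ.τ₁ ζ.τ₁ α.τ₁) (h₂ : IsPullback w.τ₂ τ.τ₂ ζ.τ₂ α.τ₂)
    (h₃ : IsPullback w.τ₃ τ.τ₃ ζ.τ₃ α.τ₃) (h₄ : IsPullback w.τ₄ τ.τ₄ ζ.τ₄ α.τ₄)
    [HasPullback Z.f₂₄ Z.f₃₄] (hT : T.IsPullback) (hA : A.IsPullback) (hB : B.IsPullback) :
    Z.IsPullback := by
  have hV := IsPullback.of_hasPullback Z.f₂₄ Z.f₃₄
  obtain ⟨u, hu₂, hu₃⟩ := hV.exists_lift Z.f₁₂ Z.f₁₃ Z.fac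
  obtain ⟨ν, hν₂, hν₃⟩ := hB.exists_lift (pullback.fst Z.f₂₄ Z.f₃₄ ≫ ζ.τ₂)
    (pullback.snd Z.f₂₄ Z.f₃₄ ≫ ζ.τ₃)
    (by simp only [Category.assoc, ← ζ.comm₂₄, ← ζ.comm₃₄, hV.w_assoc])
  have huν : u ≫ ν = ζ.τ₁ := hB.hom_ext
    (by rw [Category.assoc, hν₂, reassoc_of% hu₂, ζ.comm₁₂])
    (by rw [Category.assoc, hν₃, reassoc_of% hu₃, ζ.comm₁₃])
  let F : Square 𝒟 := ⟨w.τ₁ ≫ u, τ.τ₁, ν, α.τ₁, by rw [Category.assoc, huν, h₁.w]⟩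
  let m : F ⟶ ⟨w.τ₂, τ.τ₂, ζ.τ₂, α.τ₂, h₂.w⟩ :=
    ⟨T.f₁₂, pullback.fst _ _, A.f₁₂, B.f₁₂, by simp [F, hu₂], by simp [F], hν₂, by simp [F]⟩
  let n : F ⟶ ⟨w.τ₃, τ.τ₃, ζ.τ₃, α.τ₃, h₃.w⟩ :=
    ⟨T.f₁₃, pullback.snd _ _, A.f₁₃, B.f₁₃, by simp [F, hu₃], by simp [F], hν₃, by simp [F]⟩
  let f : Square.mk w.τ₂ τ.τ₂ ζ.τ₂ α.τ₂ h₂.w ⟶ ⟨w.τ₄, τ.τ₄, ζ.τ₄, α.τ₄, h₄.w⟩ :=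
    ⟨T.f₂₄, Z.f₂₄, A.f₂₄, B.f₂₄, by simp, by simp, by simp, by simp⟩
  let g : Square.mk w.τ₃ τ.τ₃ ζ.τ₃ α.τ₃ h₃.w ⟶ ⟨w.τ₄, τ.τ₄, ζ.τ₄, α.τ₄, h₄.w⟩ :=
    ⟨T.f₃₄, Z.f₃₄, A.f₃₄, B.f₃₄, by simp, by simp, by simp, by simp⟩
  have hF := isPullback_of_isPullback_vertices (m := m) (n := n) (f := f) (g := g) h₂ h₃ h₄ hT hV hA
  have := isIso_of_isPullback_of_isPullback hα huν h₁ hF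
  exact hV.of_iso (asIso u).symm (.refl _) (.refl _) (.refl _) (by simp [← hu₂]) (by simp [← hu₃])
    (by simp) (by simp)

end HasEffectiveDescent

end Descent

section Monadicity

theorem isEquivalence_comparison_of_monadicRightAdjoint {𝒜 ℬ : Type*} [Category.{v} 𝒜]
    [Category.{v} ℬ] {L : 𝒜 ⥤ ℬ} {R : ℬ ⥤ 𝒜} (adj : L ⊣ R) [MonadicRightAdjoint R] :
    (Monad.comparison adj).IsEquivalence :=
  have : Monad.CreatesColimitOfIsSplitPair R :=
    ⟨fun f g ↦ Monad.createsGSplitCoequalizersOfMonadic R f g⟩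
  (Monad.monadicOfCreatesGSplitCoequalizers adj).eqv

variable {𝒟 : Type u} [Category.{v} 𝒟] {E : MorphismProperty 𝒟}

namespace ESliceObj

variable {B : 𝒟} {x y z : ESliceObj E B}

@[simp] theorem id_top (x : ESliceObj E B) : ESliceHom.top (𝟙 x) = 𝟙 x.dom := rfl

@[simp] theorem comp_top (φ : x ⟶ y) (ψ : y ⟶ z) : (φ ≫ ψ).top = φ.top ≫ ψ.top := rfl

theorem hom_ext {φ ψ : x ⟶ y} (h : φ.top = ψ.top) : φ = ψ :=
  ESliceHom.ext h

/-- An isomorphism of slices from an isomorphism of domains. -/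
def isoMk (e : x.dom ≅ y.dom) (h : e.hom ≫ y.hom = x.hom) : x ≅ y where
  hom := ⟨e.hom, h⟩
  inv := ⟨e.inv, by rw [← h, e.inv_hom_id_assoc]⟩
  hom_inv_id := hom_ext e.hom_inv_id
  inv_hom_id := hom_ext e.inv_hom_id

variable [E.IsStableUnderComposition] {A : 𝒟} {f : A ⟶ B}

/-- Composition with a morphism of the class, as a functor between slices. -/
abbrev postcomp (hf : E f) : ESliceObj E A ⥤ ESliceObj E B where
  obj w := ⟨w.dom, w.hom ≫ f, E.comp_mem _ _ w.mem hf⟩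
  map φ := ⟨φ.top, by rw [← Category.assoc, φ.w]⟩

end ESliceObj

namespace PullbackFunctorAlong

theorem nonempty [E.HasPullbacks] [E.IsStableUnderBaseChange] {A B : 𝒟} (f : A ⟶ B) :
    Nonempty (PullbackFunctorAlong E f) := by
  have (g : ESliceObj E B) : HasPullback g.hom f := E.hasPullback f g.mem
  have hP (g : ESliceObj E B) := IsPullback.of_hasPullback g.hom f
  exact ⟨{
    R := {
      obj g := ⟨_, pullback.snd g.hom f, E.of_isPullback (hP g) g.mem⟩
      map {g h} φ := ⟨(hP h).lift (pullback.fst g.hom f ≫ φ.top) (pullback.snd g.hom f)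
        (by rw [Category.assoc, φ.w, (hP g).w]), (hP h).lift_snd _ _ _⟩
      map_id g := ESliceObj.hom_ext ((hP g).hom_ext (by simp) (by simp))
      map_comp {g h k} φ ψ := ESliceObj.hom_ext ((hP k).hom_ext (by simp) (by simp)) }
    top g := pullback.fst g.hom f
    isPB := hP
    nat {g h} φ := (hP h).lift_fst _ _ _ }⟩

variable [E.IsStableUnderComposition] {A B : 𝒟} {f : A ⟶ B} (P : PullbackFunctorAlong E f)
  (hf : E f)

/-- Composition with `f` is left adjoint to pullback along `f`. -/
noncomputable def adj : ESliceObj.postcomp hf ⊣ P.R := Adjunction.mkOfHomEquiv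
  { homEquiv w z :=
      { toFun φ := ⟨(P.isPB z).lift φ.top w.hom φ.w, (P.isPB z).lift_snd _ _ _⟩
        invFun ψ := ⟨ψ.top ≫ P.top z, by
          rw [Category.assoc, (P.isPB z).w, ← Category.assoc, ψ.w]⟩
        left_inv φ := ESliceObj.hom_ext ((P.isPB z).lift_fst _ _ _)
        right_inv ψ := ESliceObj.hom_ext ((P.isPB z).hom_ext
          ((P.isPB z).lift_fst _ _ _) (((P.isPB z).lift_snd _ _ _).trans ψ.w.symm)) }
    homEquiv_naturality_left_symm φ ψ := ESliceObj.hom_ext (Category.assoc _ _ _)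
    homEquiv_naturality_right {w z z'} φ ψ := ESliceObj.hom_ext ((P.isPB z').hom_ext
      (by
        refine ((P.isPB z').lift_fst _ _ _).trans ?_
        rw [ESliceObj.comp_top, ESliceObj.comp_top, Category.assoc, P.nat]
        exact ((P.isPB z).lift_fst_assoc _ _ _ _).symm)
      (by rw [ESliceHom.w, ESliceHom.w])) }

theorem counit_app_top (z : ESliceObj E B) : ((P.adj hf).counit.app z).top = P.top z :=
  Category.id_comp _

theorem unit_app_comp_top (w : ESliceObj E A) :
    ((P.adj hf).unit.app w).top ≫ P.top ((ESliceObj.postcomp hf).obj w) = 𝟙 w.dom :=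
  (P.isPB _).lift_fst _ _ _

variable {P hf}

/-- The descent datum given by an algebra for the monad of the adjunction `P.adj hf`. -/
noncomputable def descentDatum (X : (P.adj hf).toMonad.Algebra) : DescentDatum f X.A.hom :=
  .mk' (act := X.a.top) (u := ((P.adj hf).unit.app X.A).top)
    (m := ((P.adj hf).toMonad.μ.app X.A).top) (n := ((P.adj hf).toMonad.map X.a).top)
    (P.isPB ((ESliceObj.postcomp hf).obj X.A))
    (P.isPB ((ESliceObj.postcomp hf).obj ((P.adj hf).toMonad.obj X.A))) X.a.w
    (P.unit_app_comp_top hf X.A) ((P.adj hf).unit.app X.A).w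
    ((P.nat _).trans (congrArg (P.top _ ≫ ·) (P.counit_app_top hf _)))
    ((P.adj hf).toMonad.μ.app X.A).w (P.nat _) ((P.adj hf).toMonad.map X.a).w
    (congrArg ESliceHom.top X.unit) (congrArg ESliceHom.top X.assoc)

theorem descends_descentDatum_comparison (z : ESliceObj E B) :
    (descentDatum ((Monad.comparison (P.adj hf)).obj z)).Descends z.hom (P.top z) where
  isPullback := P.isPB z
  fst_comp := (congrArg (P.top _ ≫ ·) (P.counit_app_top hf z)).symm.trans (P.nat _).symm

theorem exists_iso_of_descends {X Y : (P.adj hf).toMonad.Algebra} {Z : 𝒟} {z : Z ⟶ B}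
    {p : X.A.dom ⟶ Z} {q : Y.A.dom ⟶ Z} (hX : (descentDatum X).Descends z p)
    (hY : (descentDatum Y).Descends z q) : Nonempty (X ≅ Y) := by
  have he₁ : (hX.isPullback.isoIsPullback _ _ hY.isPullback).hom ≫ q = p :=
    IsPullback.isoIsPullback_hom_fst _ _ _ _
  have he₂ : (hX.isPullback.isoIsPullback _ _ hY.isPullback).hom ≫ Y.A.hom = X.A.hom :=
    IsPullback.isoIsPullback_hom_snd _ _ _ _
  exact ⟨Monad.Algebra.isoMk (ESliceObj.isoMk _ he₂) (ESliceObj.hom_ext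
    (hY.act_comm he₂ (P.nat _) (P.R.map _).w (by rw [he₁, hX.fst_comp])))⟩

section HasEffectiveDescent

variable [HasEffectiveDescent E]

theorem essSurj_comparison : (Monad.comparison (P.adj hf)).EssSurj where
  mem_essImage X := by
    obtain ⟨Z, z, q, hz, h⟩ := HasEffectiveDescent.exists_descends (descentDatum X) hf X.A.mem
    exact ⟨⟨Z, z, hz⟩, exists_iso_of_descends (descends_descentDatum_comparison _) h⟩

variable [E.IsStableUnderBaseChange]

theorem faithful_comparison : (Monad.comparison (P.adj hf)).Faithful where
  map_injective {y z φ ψ} h := by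
    have := epi_of_mem (E.of_isPullback (P.isPB y).flip hf)
    have h' : (P.R.map φ).top = (P.R.map ψ).top :=
      congrArg ESliceHom.top (congrArg Monad.Algebra.Hom.f h)
    exact ESliceObj.hom_ext (by rw [← cancel_epi (P.top y), ← P.nat, h', P.nat])

theorem full_comparison : (Monad.comparison (P.adj hf)).Full where
  map_surjective {y z} g := by
    obtain ⟨k, hk, hkz⟩ := (descends_descentDatum_comparison y).exists_desc_of_act_comm hf
      (descends_descentDatum_comparison z) g.f.w (P.nat ((ESliceObj.postcomp hf).map g.f))
      (congrArg ESliceHom.top g.h)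
    refine ⟨⟨k, hkz⟩, Monad.Algebra.Hom.ext (ESliceObj.hom_ext ((P.isPB z).hom_ext ?_ ?_))⟩
    · exact (P.nat _).trans hk
    · exact (P.R.map _).w.trans g.f.w.symm

theorem isEquivalence_comparison : (Monad.comparison (P.adj hf)).IsEquivalence where
  faithful := faithful_comparison
  full := full_comparison
  essSurj := essSurj_comparison

end HasEffectiveDescent

/-- The algebra for the monad of the adjunction `P.adj hf` given by a descent datum. -/
noncomputable def algebra {w : ESliceObj E A} (δ : DescentDatum f w.hom) :
    (P.adj hf).toMonad.Algebra :=
  let δ' := δ.copy (P.isPB ((ESliceObj.postcomp hf).obj w))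
  { A := w
    a := ⟨δ'.act, δ'.act_comp⟩
    unit := ESliceObj.hom_ext
      (δ'.act_eq_id (P.unit_app_comp_top hf w) ((P.adj hf).unit.app w).w)
    assoc := ESliceObj.hom_ext (δ'.act_act (P.nat _)
      ((P.nat _).trans (congrArg (P.top _ ≫ ·) (P.counit_app_top hf _)))
      (((P.adj hf).toMonad.μ.app w).w.trans (P.R.map _).w.symm)).symm }

end PullbackFunctorAlong

section OfIsEquivalence

open PullbackFunctorAlong

variable {A B : 𝒟} {f : A ⟶ B} {P : PullbackFunctorAlong E f} {hf : E f}

section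

variable [E.IsStableUnderComposition]

theorem exists_descends_of_essSurj_comparison [(Monad.comparison (P.adj hf)).EssSurj] {W : 𝒟}
    {w : W ⟶ A} (δ : DescentDatum f w) (hw : E w) :
    ∃ (Z : 𝒟) (z : Z ⟶ B) (q : W ⟶ Z), E z ∧ δ.Descends z q := by
  let X : (P.adj hf).toMonad.Algebra := algebra (w := ⟨W, w, hw⟩) δ
  let z := (Monad.comparison (P.adj hf)).objPreimage X
  let θ := ((Monad.comparison (P.adj hf)).objObjPreimageIso X).symm
  have hθ : θ.hom.f.top ≫ θ.inv.f.top = 𝟙 W :=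
    congrArg ESliceHom.top (congrArg Monad.Algebra.Hom.f θ.hom_inv_id)
  have hθ' : θ.inv.f.top ≫ θ.hom.f.top = 𝟙 _ :=
    congrArg ESliceHom.top (congrArg Monad.Algebra.Hom.f θ.inv_hom_id)
  have h : (descentDatum X).Descends z.hom (θ.hom.f.top ≫ P.top z) :=
    (descends_descentDatum_comparison z).of_iso ⟨_, _, hθ, hθ'⟩ θ.hom.f.w (P.nat _)
      (congrArg ESliceHom.top θ.hom.h)
  exact ⟨z.dom, z.hom, _, z.mem, DescentDatum.Descends.of_copy h⟩

theorem eq_of_faithful_comparison [E.ContainsIdentities] [(Monad.comparison (P.adj hf)).Faithful]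
    {z : ESliceObj E B} {s t : B ⟶ z.dom} (hs : s ≫ z.hom = 𝟙 B) (ht : t ≫ z.hom = 𝟙 B)
    (h : f ≫ s = f ≫ t) : s = t := by
  let y : ESliceObj E B := ⟨B, 𝟙 B, E.id_mem B⟩
  have hy : P.top y = (P.R.obj y).hom ≫ f := by
    rw [← (P.isPB y).w]; exact (Category.comp_id _).symm
  let σ : y ⟶ z := ⟨s, hs⟩
  let τ : y ⟶ z := ⟨t, ht⟩
  have hR : P.top y ≫ s = P.top y ≫ t := by rw [hy, Category.assoc, Category.assoc, h]
  have hστ : σ = τ := (Monad.comparison (P.adj hf)).map_injective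
    (Monad.Algebra.Hom.ext (ESliceObj.hom_ext ((P.isPB z).hom_ext
      ((P.nat σ).trans (hR.trans (P.nat τ).symm)) ((P.R.map σ).w.trans (P.R.map τ).w.symm))))
  exact congrArg ESliceHom.top hστ

theorem exists_eq_comp_of_full_comparison [E.ContainsIdentities]
    [(Monad.comparison (P.adj hf)).Full] {z : ESliceObj E B} {K : 𝒟} {p₁ p₂ : K ⟶ A}
    (hK : IsKernelPair f p₁ p₂) {s : A ⟶ z.dom} (hs : s ≫ z.hom = f) (h : p₁ ≫ s = p₂ ≫ s) :
    ∃ m, f ≫ m = s := by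
  let y : ESliceObj E B := ⟨B, 𝟙 B, E.id_mem B⟩
  obtain ⟨g, hg₁, hg₂⟩ := (P.isPB z).exists_lift ((P.R.obj y).hom ≫ s) (P.R.obj y).hom
    (by rw [Category.assoc, hs])
  let γ : P.R.obj y ⟶ P.R.obj z := ⟨g, hg₂⟩
  let δ := descentDatum ((Monad.comparison (P.adj hf)).obj y)
  have hδ : δ.fst ≫ g ≫ P.top z = δ.act ≫ g ≫ P.top z :=
    (congrArg (δ.fst ≫ ·) hg₁).trans ((δ.fst_comp_comp_eq_act_comp_comp hK h).trans
      (congrArg (δ.act ≫ ·) hg₁.symm))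
  obtain ⟨φ, hφ⟩ := (Monad.comparison (P.adj hf)).map_surjective (X := y) (Y := z)
    ⟨γ, ESliceObj.hom_ext ((descends_descentDatum_comparison z).act_comm (δ := δ) hg₂ (P.nat _)
      (P.R.map _).w hδ)⟩
  have hφg : (P.R.map φ).top = g := congrArg ESliceHom.top (congrArg Monad.Algebra.Hom.f hφ)
  obtain ⟨t, ht₁, ht₂⟩ := (P.isPB y).exists_lift f (𝟙 A) (by simp [y])
  exact ⟨φ.top, by rw [← ht₁, Category.assoc, ← P.nat, hφg, hg₁, reassoc_of% ht₂]⟩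

end

theorem exists_isPullback_terminal [HasZeroMorphisms 𝒟] (E : MorphismProperty 𝒟)
    [IsExtensionClass E] (B C : 𝒟) {Z : 𝒟} (hZ : IsZero Z) :
    ∃ (z : ESliceObj E B) (p : z.dom ⟶ C), IsPullback z.hom p (0 : B ⟶ Z) 0 := by
  have hC : E (0 : C ⟶ Z) := mem_of_section E (s := 0) (hZ.eq_of_src _ _)
  have := E.hasPullback (0 : B ⟶ Z) hC
  have h := (IsPullback.of_hasPullback (0 : C ⟶ Z) (0 : B ⟶ Z))
  exact ⟨⟨_, _, E.of_isPullback h hC⟩, _, h.flip⟩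

variable [HasZeroMorphisms 𝒟] [HasZeroObject 𝒟] [IsExtensionClass E]

theorem epi_of_faithful_comparison [(Monad.comparison (P.adj hf)).Faithful] : Epi f where
  left_cancellation {C} k₁ k₂ hk := by
    obtain ⟨Z, hZ⟩ := HasZeroObject.zero (C := 𝒟)
    obtain ⟨z, p, hz⟩ := exists_isPullback_terminal E B C hZ
    obtain ⟨g₁, hg₁, hg₁p⟩ := hz.exists_lift (𝟙 B) k₁ (hZ.eq_of_tgt _ _)
    obtain ⟨g₂, hg₂, hg₂p⟩ := hz.exists_lift (𝟙 B) k₂ (hZ.eq_of_tgt _ _)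
    rw [← hg₁p, ← hg₂p, eq_of_faithful_comparison (P := P) (hf := hf) hg₁ hg₂ (hz.hom_ext
      (by rw [Category.assoc, Category.assoc, hg₁, hg₂])
      (by rw [Category.assoc, Category.assoc, hg₁p, hg₂p, hk]))]

theorem isRegularEpi_of_isEquivalence_comparison [(Monad.comparison (P.adj hf)).IsEquivalence] :
    IsRegularEpi f := by
  have : Epi f := epi_of_faithful_comparison (P := P) (hf := hf)
  have := E.hasPullback f hf
  have hK := IsKernelPair.of_hasPullback f
  refine isRegularEpi_of_exists_desc hK.w fun {C} k hk ↦ ?_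
  obtain ⟨Z, hZ⟩ := HasZeroObject.zero (C := 𝒟)
  obtain ⟨z, p, hz⟩ := exists_isPullback_terminal E B C hZ
  obtain ⟨s, hs, hsp⟩ := hz.exists_lift f k (hZ.eq_of_tgt _ _)
  obtain ⟨m, hm⟩ := exists_eq_comp_of_full_comparison (P := P) (hf := hf) hK hs (hz.hom_ext
    (by rw [Category.assoc, Category.assoc, hs, hK.w])
    (by rw [Category.assoc, Category.assoc, hsp, hk]))
  exact ⟨m ≫ p, by rw [reassoc_of% hm, hsp]⟩

end OfIsEquivalence

theorem axM_iff_hasEffectiveDescent [HasZeroMorphisms 𝒟] [HasZeroObject 𝒟] [IsExtensionClass E] :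
    AxM E ↔ HasEffectiveDescent E := by
  refine ⟨fun h ↦ ⟨fun f hf ↦ ?_, fun {A B W f w} δ hf hw ↦ ?_⟩, fun _ A B f hf P ↦
    ⟨⟨_, P.adj hf, PullbackFunctorAlong.isEquivalence_comparison⟩⟩⟩
  all_goals
    obtain ⟨P⟩ := PullbackFunctorAlong.nonempty (E := E) f
    obtain ⟨_⟩ := h f hf P
    have := isEquivalence_comparison_of_monadicRightAdjoint (P.adj hf)
  · exact isRegularEpi_of_isEquivalence_comparison (P := P) (hf := hf)
  · exact exists_descends_of_essSurj_comparison (P := P) (hf := hf) δ hw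

end Monadicity

namespace ExtObj

section Descent

variable {𝒟 : Type u} [Category.{v} 𝒟] [HasZeroMorphisms 𝒟] [HasZeroObject 𝒟]
  {E : MorphismProperty 𝒟} [IsExtensionClass E] [HasEffectiveDescent E] {a b : ExtObj E}
  {φ : a ⟶ b}

theorem isRegularEpi_of_isDoubleExt (hφ : IsDoubleExt φ) : IsRegularEpi φ := by
  have ht := epi_of_mem hφ.1
  have hb := epi_of_mem hφ.2.1
  have := HasEffectiveDescent.isRegularEpi _ hφ.1
  have := HasEffectiveDescent.isRegularEpi _ hφ.2.1
  have := (DoubleExtClass E).hasPullback φ hφ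
  have hK := IsKernelPair.of_hasPullback φ
  obtain ⟨hKt, hKb⟩ := isPullback_top_and_isPullback_bot hφ hK
  have : Epi φ := ⟨fun ψ χ h ↦ hom_ext (ht.left_cancellation _ _ (congrArg ExtHom.top h))
    (hb.left_cancellation _ _ (congrArg ExtHom.bot h))⟩
  refine isRegularEpi_of_exists_desc hK.w fun {c} k hk ↦ ?_
  obtain ⟨m, hm⟩ := IsRegularEpi.exists_of_isKernelPair _ hKt k.top (congrArg ExtHom.top hk)
  obtain ⟨n, hn⟩ := IsRegularEpi.exists_of_isKernelPair _ hKb k.bot (congrArg ExtHom.bot hk)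
  refine ⟨⟨m, n, ?_⟩, hom_ext hm hn⟩
  rw [← cancel_epi φ.top, reassoc_of% hm, k.w, ← hn, ← Category.assoc, ← φ.w, Category.assoc]

theorem exists_descends_of_isPullback (hφ : IsDoubleExt φ) {w : ExtObj E} {ω : w ⟶ a}
    (δ : DescentDatum φ ω) (hω : IsDoubleExt ω) {Z₁ Z₀ : 𝒟} {z₁ : Z₁ ⟶ b.dom} {q₁ : w.dom ⟶ Z₁}
    {z₀ : Z₀ ⟶ b.cod} {q₀ : w.cod ⟶ Z₀} (h₁ : IsPullback q₁ ω.top z₁ φ.top)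
    (h₀ : IsPullback q₀ ω.bot z₀ φ.bot) (hδ₁ : δ.fst.top ≫ q₁ = δ.act.top ≫ q₁)
    (hδ₀ : δ.fst.bot ≫ q₀ = δ.act.bot ≫ q₀) {m : Z₁ ⟶ Z₀} (hm : q₁ ≫ m = w.hom ≫ q₀) :
    ∃ (z : ExtObj E) (ζ : z ⟶ b) (q : w ⟶ z), IsDoubleExt ζ ∧ δ.Descends ζ q := by
  have := epi_of_mem (E.of_isPullback h₁.flip hφ.1)
  have hq₀ : E q₀ := E.of_isPullback h₀.flip hφ.2.1
  let z : ExtObj E := ⟨Z₁, Z₀, m,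
    IsExtensionClass.right_of_comp q₁ m (hm ▸ E.comp_mem _ _ w.mem hq₀)⟩
  let q : w ⟶ z := ⟨q₁, q₀, hm⟩
  let ζ : z ⟶ b := ⟨z₁, z₀, by
    rw [← cancel_epi q₁, h₁.w_assoc, φ.w, reassoc_of% ω.w, reassoc_of% hm, h₀.w]⟩
  have h : IsPullback q ω ζ φ := isPullback_of_isPullback_top_bot h₁ h₀
  exact ⟨z, ζ, q, IsExtensionClass.right_of_comp (E := DoubleExtClass E) q ζ
    (h.w ▸ (DoubleExtClass E).comp_mem _ _ hω hφ), h, hom_ext hδ₁ hδ₀⟩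

theorem exists_descends_of_isDoubleExt (hφ : IsDoubleExt φ) {w : ExtObj E} {ω : w ⟶ a}
    (δ : DescentDatum φ ω) (hω : IsDoubleExt ω) :
    ∃ (z : ExtObj E) (ζ : z ⟶ b) (q : w ⟶ z), IsDoubleExt ζ ∧ δ.Descends ζ q := by
  have hfst := (DoubleExtClass E).of_isPullback δ.isPullback.flip hφ
  have := (DoubleExtClass E).hasPullback δ.act hfst
  have hS := (IsPullback.of_hasPullback δ.fst δ.act).flip
  obtain ⟨hSt, hSb⟩ := isPullback_top_and_isPullback_bot hfst hS
  obtain ⟨hDt, hDb⟩ := isPullback_top_and_isPullback_bot hφ δ.isPullback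
  obtain ⟨Z₁, z₁, q₁, -, h₁⟩ :=
    HasEffectiveDescent.exists_descends (δ.map (domFunctor E) hS hSt hDt) hφ.1 hω.1
  obtain ⟨Z₀, z₀, (q₀ : w.cod ⟶ Z₀), -, h₀⟩ :=
    HasEffectiveDescent.exists_descends (δ.map (codFunctor E) hS hSb hDb) hφ.2.1 hω.2.1
  have hδ₀ : δ.fst.bot ≫ q₀ = δ.act.bot ≫ q₀ := h₀.fst_comp
  obtain ⟨m, hm⟩ := h₁.exists_desc hφ.1 (w.hom ≫ q₀) (by
    change δ.fst.top ≫ w.hom ≫ q₀ = δ.act.top ≫ w.hom ≫ q₀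
    rw [reassoc_of% δ.fst.w, reassoc_of% δ.act.w, hδ₀])
  exact exists_descends_of_isPullback hφ δ hω h₁.isPullback h₀.isPullback h₁.fst_comp hδ₀ hm

instance : HasEffectiveDescent (DoubleExtClass E) where
  isRegularEpi _ := isRegularEpi_of_isDoubleExt
  exists_descends δ hφ hω := exists_descends_of_isDoubleExt hφ δ hω

end Descent

end ExtObj

/-- A reflection of a category onto the objects satisfying `P`, given by the objectwise universal
arrows. -/
structure Reflection {𝒟 : Type u} [Category.{v} 𝒟] (P : ObjectProperty 𝒟) where
  obj : 𝒟 → 𝒟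
  unit (X : 𝒟) : X ⟶ obj X
  prop_obj (X : 𝒟) : P (obj X)
  existsUnique {X Y : 𝒟} (hY : P Y) (f : X ⟶ Y) : ∃! g, unit X ≫ g = f

namespace Reflection

variable {𝒟 : Type u} [Category.{v} 𝒟] {P : ObjectProperty 𝒟} (R : Reflection P)

theorem hom_ext {X Y : 𝒟} (hY : P Y) {f g : R.obj X ⟶ Y} (h : R.unit X ≫ f = R.unit X ≫ g) :
    f = g :=
  (R.existsUnique hY _).unique h rfl

/-- The factorisation of a morphism through the unit. -/
noncomputable def desc {X Y : 𝒟} (hY : P Y) (f : X ⟶ Y) : R.obj X ⟶ Y :=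
  (R.existsUnique hY f).choose

@[simp] theorem unit_comp_desc {X Y : 𝒟} (hY : P Y) (f : X ⟶ Y) : R.unit X ≫ R.desc hY f = f :=
  (R.existsUnique hY f).choose_spec.1

/-- The reflector, as an endofunctor of the ambient category. -/
noncomputable def functor : 𝒟 ⥤ 𝒟 where
  obj := R.obj
  map {X Y} f := R.desc (R.prop_obj Y) (f ≫ R.unit Y)
  map_id X := R.hom_ext (R.prop_obj X) (by simp)
  map_comp {X Y Z} f g := R.hom_ext (R.prop_obj Z) (by
    simp only [unit_comp_desc, ← Category.assoc]
    simp only [unit_comp_desc, Category.assoc])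

theorem unit_comp_map {X Y : 𝒟} (f : X ⟶ Y) : R.unit X ≫ R.functor.map f = f ≫ R.unit Y :=
  R.unit_comp_desc (R.prop_obj Y) _

theorem isIso_unit_of_retraction {X : 𝒟} {r : R.obj X ⟶ X} (h : R.unit X ≫ r = 𝟙 X) :
    IsIso (R.unit X) :=
  ⟨r, h, R.hom_ext (R.prop_obj X) (by rw [reassoc_of% h, Category.comp_id])⟩

variable [P.IsClosedUnderIsomorphisms]

include R in
theorem prop_of_isPullback {X Y Z W : 𝒟} {fst : W ⟶ X} {snd : W ⟶ Y} {f : X ⟶ Z} {g : Y ⟶ Z}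
    (h : IsPullback fst snd f g) (hX : P X) (hY : P Y) (hZ : P Z) : P W := by
  obtain ⟨r, hrx, hry⟩ := h.exists_lift (R.desc hX fst) (R.desc hY snd)
    (R.hom_ext hZ (by rw [← Category.assoc, ← Category.assoc, unit_comp_desc, unit_comp_desc, h.w]))
  have := R.isIso_unit_of_retraction (r := r)
    (h.hom_ext (by rw [Category.assoc, hrx, unit_comp_desc, Category.id_comp])
      (by rw [Category.assoc, hry, unit_comp_desc, Category.id_comp]))
  exact P.prop_of_iso (asIso (R.unit W)).symm (R.prop_obj W)

end Reflection

/-- The closed Galois structure with class of extensions `E` given by a reflection with unit in `E`,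
the class `ℱ` consisting of the morphisms of `E` between objects of the subcategory. -/
noncomputable def GaloisStructure.ofReflection {𝒟 : Type u} [Category.{v} 𝒟] {P : ObjectProperty 𝒟}
    [P.IsClosedUnderIsomorphisms] (R : Reflection P) (E : MorphismProperty 𝒟) [E.IsMultiplicative]
    [E.IsStableUnderBaseChange] [E.HasPullbacks] (h4 : AxE4 E) (hη : ∀ X, E (R.unit X)) :
    GaloisStructure 𝒟 where
  inX := P
  inX_iso e := P.prop_of_iso e
  I := R.functor
  η := { app := R.unit, naturality _ _ f := (R.unit_comp_map f).symm }
  I_mem := R.prop_obj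
  refl_univ hD f := R.existsUnique hD f
  η_iso_of_mem hC := R.isIso_unit_of_retraction (R.unit_comp_desc hC (𝟙 _))
  E := E
  F X Y f := P X ∧ P Y ∧ E f
  F_sub_E _ h := h.2.2
  F_in_X _ h := ⟨h.1, h.2.1⟩
  E1 f _ := E.of_isIso f
  E2 f g hg :=
    have := E.hasPullback f hg
    have h := (IsPullback.of_hasPullback g f).flip
    ⟨_, _, _, h, E.of_isPullback h.flip hg⟩
  E3 f g := E.comp_mem f g
  F1 f hX hY _ := ⟨hX, hY, E.of_isIso f⟩
  F2 f g hX hg :=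
    have := E.hasPullback f hg.2.2
    have h := (IsPullback.of_hasPullback g f).flip
    ⟨_, _, _, h, R.prop_of_isPullback h hX hg.1 hg.2.1, hX, E.of_isPullback h.flip hg.2.2⟩
  F3 f g hf hg := ⟨hf.1, hg.2.1, E.comp_mem f g hf.2.2 hg.2.2⟩
  I_map_mem f hf := ⟨R.prop_obj _, R.prop_obj _, h4 (R.unit _) _
    (R.unit_comp_map f ▸ E.comp_mem _ _ hf (hη _))⟩
  η_mem := hη

namespace ExtObj

section KernelPair

variable {𝒟 : Type u} [Category.{v} 𝒟] [HasZeroMorphisms 𝒟] (E : MorphismProperty 𝒟)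
  [IsExtensionClass E]

/-- The functor sending an extension to its kernel pair. -/
noncomputable def kernelPair : ExtObj E ⥤ 𝒟 :=
  pullback (homNatTrans E) (homNatTrans E)

/-- The first projection of the kernel pair of an extension. -/
noncomputable def kernelPairFst : kernelPair E ⟶ domFunctor E :=
  pullback.fst (homNatTrans E) (homNatTrans E)

/-- The second projection of the kernel pair of an extension. -/
noncomputable def kernelPairSnd : kernelPair E ⟶ domFunctor E :=
  pullback.snd (homNatTrans E) (homNatTrans E)

variable {E}

theorem isKernelPair_kernelPairFst_kernelPairSnd (a : ExtObj E) :
    IsKernelPair a.hom ((kernelPairFst E).app a) ((kernelPairSnd E).app a) :=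
  isPullback_app_pullback (homNatTrans E) (homNatTrans E) a

theorem exists_section_kernelPairFst (a : ExtObj E) :
    ∃ s, s ≫ (kernelPairFst E).app a = 𝟙 a.dom ∧ s ≫ (kernelPairSnd E).app a = 𝟙 a.dom :=
  (isKernelPair_kernelPairFst_kernelPairSnd a).exists_lift _ _ rfl

theorem isPullback_kernelPair_map {sq : Square (ExtObj E)}
    (ht : (sq.map (domFunctor E)).IsPullback) (hb : (sq.map (codFunctor E)).IsPullback) :
    (sq.map (kernelPair E)).IsPullback :=
  isPullback_map_of_isPullback_app (isPullback_app_pullback (homNatTrans E) (homNatTrans E)) ht ht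
    hb

/- Transposing the square `φ` exhibits `kernelPair.map φ` as the comparison between the kernel pairs
of `a.hom` and `b.hom`, taken along the transposed double extension. -/
theorem mem_kernelPair_map {a b : ExtObj E} {φ : a ⟶ b} (hφ : IsDoubleExt φ) :
    E ((kernelPair E).map φ) := by
  let x : ExtObj E := ⟨a.dom, b.dom, φ.top, hφ.1⟩
  let z : ExtObj E := ⟨a.cod, b.cod, φ.bot, hφ.2.1⟩
  let ψ : x ⟶ z := ⟨a.hom, b.hom, φ.w.symm⟩
  have hψ : IsDoubleExt ψ :=
    ⟨a.mem, b.mem, fun p₁ p₂ hP l h₁ h₂ ↦ hφ.2.2 p₂ p₁ hP.flip l h₂ h₁⟩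
  exact mem_of_isPullback (φ := ψ) hψ (isKernelPair_kernelPairFst_kernelPairSnd a)
    (isKernelPair_kernelPairFst_kernelPairSnd b) ((kernelPairFst E).naturality φ)
    ((kernelPairSnd E).naturality φ)

end KernelPair

end ExtObj

namespace GaloisStructure

open ExtObj

section Trivial

variable {𝒞 : Type u} [Category.{v} 𝒞] (G : GaloisStructure 𝒞)

theorem η_comp_map {A B : 𝒞} (f : A ⟶ B) : G.η.app A ≫ G.I.map f = f ≫ G.η.app B :=
  (G.η.naturality f).symm

instance (A : 𝒞) : IsIso (G.η.app (G.I.obj A)) :=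
  G.η_iso_of_mem (G.I_mem A)

theorem map_η (A : 𝒞) : G.I.map (G.η.app A) = G.η.app (G.I.obj A) :=
  (G.refl_univ (G.I_mem _) (G.η.app A ≫ G.η.app (G.I.obj A))).unique (G.η_comp_map _) rfl

variable {G}

theorem map_section_comp_map {A B : 𝒞} {p : A ⟶ B} {s : B ⟶ A} (hs : s ≫ p = 𝟙 B) :
    G.I.map s ≫ G.I.map p = 𝟙 _ := by
  rw [← G.I.map_comp, hs, G.I.map_id]

theorem trivial_of_isIso {A B : 𝒞} (f : A ⟶ B) [IsIso f] : G.Trivial f :=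
  IsPullback.of_vert_isIso ⟨G.η_comp_map f⟩

theorem Trivial.comp {A B C : 𝒞} {f : A ⟶ B} {g : B ⟶ C} (hf : G.Trivial f) (hg : G.Trivial g) :
    G.Trivial (f ≫ g) := by
  simpa only [Trivial, G.I.map_comp] using hf.paste_vert hg

end Trivial

section SplitEpi

variable {𝒞 : Type u} [Category.{v} 𝒞] [HasZeroMorphisms 𝒞] {G : GaloisStructure 𝒞}
  [IsExtensionClass G.E] {A B T : 𝒞} {p : A ⟶ B} {s : B ⟶ A} (hs : s ≫ p = 𝟙 B)
  {j : T ⟶ G.I.obj A} {τ : T ⟶ B} (hT : IsPullback j τ (G.I.map p) (G.η.app B))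

include hs hT in
/- The naturality square of the unit at a split epimorphism is a split epimorphism of extensions,
hence a double extension. -/
theorem mem_of_comp_eq_η [HasZeroObject 𝒞] {c : A ⟶ T} (h₁ : c ≫ τ = p)
    (h₂ : c ≫ j = G.η.app A) : G.E c := by
  let a : ExtObj G.E := ⟨A, _, G.η.app A, G.η_mem A⟩
  let b : ExtObj G.E := ⟨B, _, G.η.app B, G.η_mem B⟩
  let φ : a ⟶ b := ⟨p, G.I.map p, (G.η_comp_map p).symm⟩
  let σ : b ⟶ a := ⟨s, G.I.map s, (G.η_comp_map s).symm⟩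
  have hσ : σ ≫ φ = 𝟙 b := hom_ext hs (map_section_comp_map hs)
  exact (mem_of_section (DoubleExtClass G.E) hσ).2.2 j τ hT c h₂ h₁

include hs hT in
theorem trivial_of_isPullback_η (hI : PreservesType1 G.E G.I) : G.Trivial τ := by
  have h := map_section_comp_map (G := G) hs
  have hIT := hI j τ _ _ _ h (mem_of_section G.E h) (G.η_mem B) hT
  have hηη : IsPullback (G.η.app (G.I.obj A)) (G.I.map p) (G.I.map (G.I.map p))
    (G.η.app (G.I.obj B)) := IsPullback.of_horiz_isIso ⟨G.η_comp_map _⟩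
  refine IsPullback.of_right ?_ (G.η_comp_map τ) hIT
  simpa only [G.η_comp_map, G.map_η] using hT.paste_horiz hηη

end SplitEpi

section Descent

variable {𝒞 : Type u} [Category.{v} 𝒞] [HasZeroMorphisms 𝒞] {G : GaloisStructure 𝒞}
  [IsExtensionClass G.E] [HasEffectiveDescent G.E] {A B C T : 𝒞}

/- The comparison of `p` with the pullback of `I p` along the unit becomes invertible after base
change along `q`. -/
theorem Trivial.of_isPullback (hI : PreservesType1 G.E G.I) {p : A ⟶ B} {s : B ⟶ A}
    (hs : s ≫ p = 𝟙 B) {q : C ⟶ B} (hq : G.E q) {k : T ⟶ A} {τ : T ⟶ C}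
    (hk : IsPullback k τ p q) (hτ : G.Trivial τ) : G.Trivial p := by
  have := G.E.hasPullback (G.I.map p) (G.η_mem B)
  have hP := (IsPullback.of_hasPullback (G.η.app B) (G.I.map p)).flip
  obtain ⟨u, hu₁, hu₂⟩ := hP.exists_lift (G.η.app A) p (G.η_comp_map p)
  have hIk := hI k τ p q s hs (mem_of_section G.E hs) hq hk
  have hku : IsPullback (k ≫ u) τ (pullback.fst (G.η.app B) (G.I.map p)) q :=
    IsPullback.of_right (by simpa only [Category.assoc, hu₁, G.η_comp_map] using hτ.paste_horiz hIk)
      (by rw [Category.assoc, hu₂, hk.w]) hP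
  have := isIso_of_isPullback_of_isPullback hq hu₂ hk hku
  exact IsPullback.of_iso hP (asIso u).symm (.refl _) (.refl _) (.refl _) (by simp [← hu₁])
    (by simp [← hu₂]) (by simp) (by simp)

end Descent

section Action

variable {𝒞 : Type u} [Category.{v} 𝒞] [HasZeroMorphisms 𝒞] {G : GaloisStructure 𝒞}
  [IsExtensionClass G.E]

/- Here `Q` consists of pairs `(x, x')` with `p₁ x = p₂ x'`. As `I` preserves `Q`, an element of
`D'` has an image in `I Q`. -/
theorem exists_act_comp_eq (hI : PreservesType1 G.E G.I) {A P Q T D' : 𝒞} {p₁ p₂ : P ⟶ A}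
    {s : A ⟶ P} (hs : s ≫ p₁ = 𝟙 A) (hp₂ : G.E p₂) {x x' act : Q ⟶ P} (hQ : IsPullback x x' p₁ p₂)
    (hact : act ≫ p₁ = x' ≫ p₁) {j : T ⟶ G.I.obj P} {τ : T ⟶ A}
    (hT : IsPullback j τ (G.I.map p₁) (G.η.app A)) {c : P ⟶ T} (h₁ : c ≫ τ = p₁)
    (h₂ : c ≫ j = G.η.app P) {y : D' ⟶ T} {y' : D' ⟶ P} (hD' : y ≫ τ = y' ≫ p₂) :
    ∃ act' : D' ⟶ T, act' ≫ τ = y' ≫ p₁ ∧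
      ∀ t : Q ⟶ D', t ≫ y = x ≫ c → t ≫ y' = x' → t ≫ act' = act ≫ c := by
  have hIQ := hI x x' p₁ p₂ s hs (mem_of_section G.E hs) hp₂ hQ
  obtain ⟨i, hi, hi'⟩ := hIQ.exists_lift (y ≫ j) (y' ≫ G.η.app P) (by
    rw [Category.assoc, hT.w, reassoc_of% hD', Category.assoc, G.η_comp_map])
  obtain ⟨act', hact₁, hact₂⟩ := hT.exists_lift (i ≫ G.I.map act) (y' ≫ p₁) (by
    rw [Category.assoc, ← G.I.map_comp, hact, G.I.map_comp, reassoc_of% hi', G.η_comp_map,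
      Category.assoc])
  refine ⟨act', hact₂, fun t ht ht' ↦ hT.hom_ext ?_ ?_⟩
  · have hti : t ≫ i = G.η.app Q := hIQ.hom_ext
      (by rw [Category.assoc, hi, reassoc_of% ht, h₂, G.η_comp_map])
      (by rw [Category.assoc, hi', reassoc_of% ht', G.η_comp_map])
    rw [Category.assoc, hact₁, reassoc_of% hti, G.η_comp_map, Category.assoc, h₂]
  · rw [Category.assoc, hact₂, reassoc_of% ht', Category.assoc, h₁, hact]

/- The kernel pair of `a` acts on its first projection, with quotient `a`. The action descends to
the trivialization `T` of the first projection. -/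
theorem exists_isPullback_isPushout [HasZeroObject 𝒞] [HasEffectiveDescent G.E]
    (hI : PreservesType1 G.E G.I) {A B P T : 𝒞} {a : A ⟶ B} (ha : G.E a) {p₁ p₂ : P ⟶ A}
    (hP : IsKernelPair a p₁ p₂) {j : T ⟶ G.I.obj P} {τ : T ⟶ A}
    (hT : IsPullback j τ (G.I.map p₁) (G.η.app A)) {c : P ⟶ T} (h₁ : c ≫ τ = p₁)
    (h₂ : c ≫ j = G.η.app P) :
    ∃ (Z : 𝒞) (z : Z ⟶ B) (w : T ⟶ Z) (q : A ⟶ Z),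
      G.E z ∧ IsPullback w τ z a ∧ IsPushout c p₂ w q ∧ q ≫ z = a := by
  obtain ⟨s, hs₁, hs₂⟩ := hP.exists_lift (𝟙 A) (𝟙 A) rfl
  have hp₂ := mem_of_section G.E hs₂
  have hc := mem_of_comp_eq_η hs₁ hT h₁ h₂
  have hτ : G.E τ := IsExtensionClass.right_of_comp c τ (h₁ ▸ mem_of_section G.E hs₁)
  have := G.E.hasPullback p₁ hp₂
  have := G.E.hasPullback τ hp₂
  have hQ := (IsPullback.of_hasPullback p₂ p₁).flip
  have hD' := (IsPullback.of_hasPullback p₂ τ).flip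
  let δ := DescentDatum.ofIsPullback hP.flip (hQ.paste_vert hP.flip)
  have hδ := DescentDatum.descends_ofIsPullback hP.flip (hQ.paste_vert hP.flip)
  obtain ⟨act', hact', hcomm⟩ := exists_act_comp_eq hI hs₁ hp₂ hQ δ.act_comp hT h₁ h₂ hD'.w
  obtain ⟨t, ht, ht'⟩ := hD'.exists_lift (pullback.snd p₂ p₁ ≫ c) (pullback.fst p₂ p₁) (by
    rw [Category.assoc, h₁, hQ.w])
  have ht'' : t ≫ pullback.fst p₂ τ ≫ p₁ = δ.snd := by rw [reassoc_of% ht']; rfl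
  have hδ' := hcomm t ht ht'
  obtain ⟨Z, z, w, hz, h⟩ := HasEffectiveDescent.exists_descends
    (δ.quotient hc h₁ (hD'.paste_vert hP.flip) hact' ht ht'' hδ') ha hτ
  obtain ⟨q, hq, hqz⟩ := hδ.exists_isPushout_of_act_comm ha h hc h₁ ht ht'' hδ'
  exact ⟨Z, z, w, q, hz, h.isPullback, hq, hqz⟩

end Action

section Trivialization

variable {𝒞 : Type u} [Category.{v} 𝒞] (G : GaloisStructure 𝒞)

/-- The unit of a Galois structure at the values of a functor. -/
def unitAt {𝒜 : Type*} [Category 𝒜] (F : 𝒜 ⥤ 𝒞) : F ⟶ F ⋙ G.I where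
  app X := G.η.app (F.obj X)
  naturality _ _ f := G.η.naturality (F.map f)

variable [HasZeroMorphisms 𝒞] [IsExtensionClass G.E]

instance {𝒜 : Type*} [Category 𝒜] {F : 𝒜 ⥤ 𝒞} (X : 𝒜) {A : 𝒞} (f : A ⟶ (F ⋙ G.I).obj X) :
    HasPullback ((G.unitAt F).app X) f :=
  G.E.hasPullback f (G.η_mem _)

/-- The functor sending an extension to the domain of the trivial extension obtained by reflecting
the first projection of its kernel pair. -/
noncomputable def trivialization : ExtObj G.E ⥤ 𝒞 :=
  pullback (G.unitAt (domFunctor G.E)) (Functor.whiskerRight (kernelPairFst G.E) G.I)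

/-- The trivial extension obtained by reflecting the first projection of the kernel pair. -/
noncomputable def trivializationFst : G.trivialization ⟶ domFunctor G.E :=
  pullback.fst (G.unitAt (domFunctor G.E)) (Functor.whiskerRight (kernelPairFst G.E) G.I)

/-- The projection of the trivialization of the kernel pair to the reflection of the kernel pair. -/
noncomputable def trivializationSnd : G.trivialization ⟶ kernelPair G.E ⋙ G.I :=
  pullback.snd (G.unitAt (domFunctor G.E)) (Functor.whiskerRight (kernelPairFst G.E) G.I)

/-- The comparison of the kernel pair of an extension with its trivialization. -/
noncomputable def toTrivialization : kernelPair G.E ⟶ G.trivialization :=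
  pullback.lift (kernelPairFst G.E) (G.unitAt (kernelPair G.E)) (by
    ext a
    exact (G.η_comp_map _).symm)

variable {G}

theorem isPullback_trivialization (a : ExtObj G.E) :
    IsPullback (G.trivializationSnd.app a) (G.trivializationFst.app a)
      (G.I.map ((kernelPairFst G.E).app a)) (G.η.app a.dom) :=
  (isPullback_app_pullback _ _ a).flip

theorem toTrivialization_comp_fst (a : ExtObj G.E) :
    G.toTrivialization.app a ≫ G.trivializationFst.app a = (kernelPairFst G.E).app a :=
  congr_app (show G.toTrivialization ≫ G.trivializationFst = _ from pullback.lift_fst ..) a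

theorem toTrivialization_comp_snd (a : ExtObj G.E) :
    G.toTrivialization.app a ≫ G.trivializationSnd.app a = G.η.app ((kernelPair G.E).obj a) :=
  congr_app (show G.toTrivialization ≫ G.trivializationSnd = _ from pullback.lift_snd ..) a

theorem mem_toTrivialization [HasZeroObject 𝒞] (a : ExtObj G.E) : G.E (G.toTrivialization.app a) :=
  have ⟨_, hs, _⟩ := exists_section_kernelPairFst a
  mem_of_comp_eq_η hs (isPullback_trivialization a) (toTrivialization_comp_fst a)
    (toTrivialization_comp_snd a)

theorem trivial_trivializationFst (hI : PreservesType1 G.E G.I) (a : ExtObj G.E) :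
    G.Trivial (G.trivializationFst.app a) :=
  have ⟨_, hs, _⟩ := exists_section_kernelPairFst a
  trivial_of_isPullback_η hs (isPullback_trivialization a) hI

theorem isPullback_trivialization_map (hI : PreservesType1 G.E G.I) {a b c d : ExtObj G.E}
    {k : a ⟶ b} {l : a ⟶ c} {g : b ⟶ d} {h : c ⟶ d} {s : d ⟶ b} (hs : s ≫ g = 𝟙 d)
    (hh : IsDoubleExt h) (ht : IsPullback k.top l.top g.top h.top)
    (hb : IsPullback k.bot l.bot g.bot h.bot) :
    IsPullback (G.trivialization.map k) (G.trivialization.map l) (G.trivialization.map g)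
      (G.trivialization.map h) := by
  let sq : Square (ExtObj G.E) := ⟨k, l, g, h, hom_ext ht.w hb.w⟩
  have preserves (F : ExtObj G.E ⥤ 𝒞) (hF : (sq.map F).IsPullback) (hhF : G.E (F.map h)) :
      (sq.map (F ⋙ G.I)).IsPullback := by
    have hsF : F.map s ≫ F.map g = 𝟙 _ := by rw [← F.map_comp, hs, F.map_id]
    exact hI _ _ _ _ _ hsF (mem_of_section G.E hsF) hhF hF
  exact isPullback_map_of_isPullback_app (sq := sq) (isPullback_app_pullback _ _) ht
    (preserves _ (isPullback_kernelPair_map (sq := sq) ht hb) (mem_kernelPair_map hh))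
    (preserves (domFunctor G.E) ht hh.1)

end Trivialization

section Normal

variable {𝒞 : Type u} [Category.{v} 𝒞] [HasZeroMorphisms 𝒞] {G : GaloisStructure 𝒞}
  [IsExtensionClass G.E]

theorem normal_of_trivial_kernelPairFst {a : ExtObj G.E}
    (h : G.Trivial ((kernelPairFst G.E).app a)) : G.Normal a.hom := by
  refine ⟨a.mem, fun p₁ p₂ hP ↦ ?_⟩
  let e := hP.isoIsPullback _ _ (isKernelPair_kernelPairFst_kernelPairSnd a)
  have he : p₁ = e.hom ≫ (kernelPairFst G.E).app a := (IsPullback.isoIsPullback_hom_fst ..).symm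
  exact he ▸ (trivial_of_isIso e.hom).comp h

theorem Normal.isIso_toTrivialization {a : ExtObj G.E} (h : G.Normal a.hom) :
    IsIso (G.toTrivialization.app a) := by
  have hT := h.2 _ _ (isKernelPair_kernelPairFst_kernelPairSnd a)
  let e := hT.isoIsPullback _ _ (isPullback_trivialization a)
  have he : e.hom = G.toTrivialization.app a := (isPullback_trivialization a).hom_ext
    ((IsPullback.isoIsPullback_hom_fst ..).trans (toTrivialization_comp_snd a).symm)
    ((IsPullback.isoIsPullback_hom_snd ..).trans (toTrivialization_comp_fst a).symm)
  exact he ▸ inferInstance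

theorem normal_of_isIso_toTrivialization (hI : PreservesType1 G.E G.I) {a : ExtObj G.E}
    [IsIso (G.toTrivialization.app a)] : G.Normal a.hom :=
  normal_of_trivial_kernelPairFst
    (toTrivialization_comp_fst a ▸ (trivial_of_isIso _).comp (trivial_trivializationFst hI a))

theorem normal_of_iso (hI : PreservesType1 G.E G.I) {a b : ExtObj G.E} (e : a ≅ b)
    (h : G.Normal a.hom) : G.Normal b.hom :=
  have := (NatTrans.isIso_app_iff_of_iso G.toTrivialization e).1 h.isIso_toTrivialization
  normal_of_isIso_toTrivialization hI

end Normal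

section NormalQuotient

variable {𝒞 : Type u} [Category.{v} 𝒞] [HasZeroMorphisms 𝒞]

/-- The normal quotient of an extension `a`: the quotient of its domain obtained by trivializing the
first projection of the kernel pair. The second projection of the kernel pair exhibits `a.dom` as a
quotient of the kernel pair by the action of the kernel pair, which is why the trivialization is the
base change of the quotient along `a`. -/
structure NormalQuotient (G : GaloisStructure 𝒞) [IsExtensionClass G.E] (a : ExtObj G.E) where
  obj : 𝒞
  hom : obj ⟶ a.cod
  mem : G.E hom
  baseFst : G.trivialization.obj a ⟶ obj
  quot : a.dom ⟶ obj
  isPullback : IsPullback baseFst (G.trivializationFst.app a) hom a.hom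
  isPushout : IsPushout (G.toTrivialization.app a) ((kernelPairSnd G.E).app a) baseFst quot
  quot_comp : quot ≫ hom = a.hom

namespace NormalQuotient

variable {G : GaloisStructure 𝒞} [IsExtensionClass G.E]

theorem nonempty [HasZeroObject 𝒞] [HasEffectiveDescent G.E] (hI : PreservesType1 G.E G.I)
    (a : ExtObj G.E) : Nonempty (NormalQuotient G a) := by
  obtain ⟨Z, z, w, q, hz, hw, hq, hqz⟩ := exists_isPullback_isPushout hI a.mem
    (isKernelPair_kernelPairFst_kernelPairSnd a) (isPullback_trivialization a)
    (toTrivialization_comp_fst a) (toTrivialization_comp_snd a)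
  exact ⟨⟨Z, z, hz, w, q, hw, hq, hqz⟩⟩

variable {a b : ExtObj G.E} (N : NormalQuotient G a)

/-- The normal quotient, as an extension. -/
def ext : ExtObj G.E :=
  ⟨N.obj, a.cod, N.hom, N.mem⟩

/-- The morphism from an extension to its normal quotient. -/
def unit : a ⟶ N.ext :=
  ⟨N.quot, 𝟙 a.cod, N.quot_comp.trans (Category.comp_id _).symm⟩

variable [HasZeroObject 𝒞]

theorem mem_quot : G.E N.quot :=
  IsExtensionClass.right_of_comp ((kernelPairSnd G.E).app a) _ (N.isPushout.w ▸
    G.E.comp_mem _ _ (mem_toTrivialization a) (G.E.of_isPullback N.isPullback.flip a.mem))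

theorem isDoubleExt_unit : IsDoubleExt N.unit := by
  refine ⟨N.mem_quot, G.E.id_mem _, fun p₁ p₂ hP l _ h₂ ↦ ?_⟩
  have : IsIso N.unit.bot := inferInstanceAs (IsIso (𝟙 a.cod))
  have : IsIso p₂ := hP.isIso_snd_of_isIso
  rw [(IsIso.eq_comp_inv p₂).2 h₂]
  exact G.E.comp_mem _ _ N.mem_quot (G.E.of_isIso _)

variable [HasEffectiveDescent G.E]

/- The base change along `quot` of the first projection of the kernel pair of `hom` is the
trivialization. -/
theorem normal_hom (hI : PreservesType1 G.E G.I) : G.Normal N.hom := by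
  let K := N.ext
  have hK := isKernelPair_kernelPairFst_kernelPairSnd K
  obtain ⟨s, hs, -⟩ := exists_section_kernelPairFst K
  have hw : IsPullback N.baseFst (G.trivializationFst.app a) N.hom (N.quot ≫ N.hom) :=
    N.quot_comp ▸ N.isPullback
  obtain ⟨k, hk₁, hk₂⟩ := hK.exists_lift (G.trivializationFst.app a ≫ N.quot) N.baseFst
    ((Category.assoc _ _ _).trans hw.w.symm)
  have hk : IsPullback k (G.trivializationFst.app a) ((kernelPairFst G.E).app K) N.quot :=
    IsPullback.of_right (hk₂ ▸ hw) hk₁ hK.flip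
  exact normal_of_trivial_kernelPairFst
    ((trivial_trivializationFst hI a).of_isPullback hI hs N.mem_quot hk)

theorem existsUnique_desc (hb : G.Normal b.hom) (f : a ⟶ b) :
    ∃! g : N.ext ⟶ b, N.unit ≫ g = f := by
  have := epi_of_mem N.mem_quot
  have := epi_of_mem (E := DoubleExtClass G.E) N.isDoubleExt_unit
  have := hb.isIso_toTrivialization
  obtain ⟨m, hm⟩ : ∃ m : N.obj ⟶ b.dom, N.quot ≫ m = f.top := by
    obtain ⟨m, -, hm⟩ := N.isPushout.exists_desc
      (G.trivialization.map f ≫ inv (G.toTrivialization.app b) ≫ (kernelPairSnd G.E).app b) f.top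
      (by simp [← G.toTrivialization.naturality_assoc f])
    exact ⟨m, hm⟩
  have hmw : m ≫ b.hom = N.hom ≫ f.bot := by
    rw [← cancel_epi N.quot, reassoc_of% hm, f.w, reassoc_of% N.quot_comp]
  have hg : N.unit ≫ (⟨m, f.bot, hmw⟩ : N.ext ⟶ b) = f := hom_ext hm (Category.id_comp _)
  exact ⟨_, hg, fun g' hg' ↦ by rw [← cancel_epi N.unit, hg, hg']⟩

theorem baseFst_comp {N : NormalQuotient G a} {M : NormalQuotient G b} {φ : a ⟶ b}
    {m : N.obj ⟶ M.obj} (h : N.quot ≫ m = φ.top ≫ M.quot) :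
    N.baseFst ≫ m = G.trivialization.map φ ≫ M.baseFst := by
  have := epi_of_mem (mem_toTrivialization a)
  rw [← cancel_epi (G.toTrivialization.app a)]
  calc
    G.toTrivialization.app a ≫ N.baseFst ≫ m
      = (kernelPairSnd G.E).app a ≫ N.quot ≫ m := N.isPushout.w_assoc m
    _ = (kernelPairSnd G.E).app a ≫ φ.top ≫ M.quot := congrArg _ h
    _ = (kernelPair G.E).map φ ≫ (kernelPairSnd G.E).app b ≫ M.quot :=
      ((kernelPairSnd G.E).naturality_assoc φ M.quot).symm
    _ = (kernelPair G.E).map φ ≫ G.toTrivialization.app b ≫ M.baseFst :=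
      congrArg _ M.isPushout.w.symm
    _ = G.toTrivialization.app a ≫ G.trivialization.map φ ≫ M.baseFst :=
      G.toTrivialization.naturality_assoc φ M.baseFst

end NormalQuotient

end NormalQuotient

section NormalReflection

variable {𝒞 : Type u} [Category.{v} 𝒞] [HasZeroMorphisms 𝒞]

/-- The property of being a normal extension. -/
def normalExtensions (G : GaloisStructure 𝒞) : ObjectProperty (ExtObj G.E) :=
  fun a ↦ G.Normal a.hom

variable {G : GaloisStructure 𝒞} [IsExtensionClass G.E]

theorem isClosedUnderIsomorphisms_normalExtensions (hI : PreservesType1 G.E G.I) :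
    G.normalExtensions.IsClosedUnderIsomorphisms :=
  ⟨fun e h ↦ normal_of_iso hI e h⟩

variable [HasZeroObject 𝒞] [HasEffectiveDescent G.E] (hI : PreservesType1 G.E G.I)

/-- A choice of normal quotient of each extension. -/
noncomputable def normalQuotient (a : ExtObj G.E) : NormalQuotient G a :=
  (NormalQuotient.nonempty hI a).some

/-- The reflection of extensions onto the normal ones, given by the normal quotients. -/
noncomputable def normalReflection : Reflection G.normalExtensions where
  obj a := (normalQuotient hI a).ext
  unit a := (normalQuotient hI a).unit
  prop_obj a := (normalQuotient hI a).normal_hom hI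
  existsUnique {a _} hb f := (normalQuotient hI a).existsUnique_desc hb f

theorem normalReflection_map_bot {a b : ExtObj G.E} (φ : a ⟶ b) :
    ((normalReflection hI).functor.map φ).bot = φ.bot := by
  have h := congrArg ExtHom.bot ((normalReflection hI).unit_comp_map φ)
  exact (Category.id_comp _).symm.trans (h.trans (Category.comp_id _))

theorem baseFst_comp_normalReflection_map_top {a b : ExtObj G.E} (φ : a ⟶ b) :
    (normalQuotient hI a).baseFst ≫ ((normalReflection hI).functor.map φ).top =
      G.trivialization.map φ ≫ (normalQuotient hI b).baseFst :=
  NormalQuotient.baseFst_comp (congrArg ExtHom.top ((normalReflection hI).unit_comp_map φ))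

/-- The trivialization as a base change of the normal quotient, naturally in the extension. -/
noncomputable def baseFstNatTrans :
    G.trivialization ⟶ (normalReflection hI).functor ⋙ domFunctor G.E where
  app a := (normalQuotient hI a).baseFst
  naturality _ _ φ := (baseFst_comp_normalReflection_map_top hI φ).symm

/-- An extension as a natural transformation to the codomain of its normal quotient. -/
noncomputable def homToNormalReflection :
    domFunctor G.E ⟶ (normalReflection hI).functor ⋙ codFunctor G.E where
  app a := a.hom
  naturality _ _ φ := φ.w.trans (congrArg _ (normalReflection_map_bot hI φ).symm)

theorem isDoubleExt_normalReflection_map {a b : ExtObj G.E} {φ : a ⟶ b} (hφ : IsDoubleExt φ) :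
    IsDoubleExt ((normalReflection hI).functor.map φ) :=
  IsExtensionClass.right_of_comp (E := DoubleExtClass G.E) ((normalReflection hI).unit a) _
    ((normalReflection hI).unit_comp_map φ ▸
      (DoubleExtClass G.E).comp_mem _ _ hφ (normalQuotient hI b).isDoubleExt_unit)

theorem preservesType1_normalReflection :
    PreservesType1 (DoubleExtClass G.E) (normalReflection hI).functor := by
  intro a b c d k l g h s hs _ hh hsq
  let F := (normalReflection hI).functor
  let sq : Square (ExtObj G.E) := ⟨k, l, g, h, hsq.w⟩
  obtain ⟨ht, hb⟩ := isPullback_top_and_isPullback_bot hh hsq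
  have hF : IsPullback (F.map k).bot (F.map l).bot (F.map g).bot (F.map h).bot := by
    simp only [F, normalReflection_map_bot]
    exact hb
  have hFh := isDoubleExt_normalReflection_map hI hh
  have : HasPullback (F.map h).top (F.map g).top := G.E.hasPullback _ hFh.1
  have : HasPullback (sq.map (F ⋙ domFunctor G.E)).f₂₄ (sq.map (F ⋙ domFunctor G.E)).f₃₄ :=
    hasPullback_symmetry (F.map h).top (F.map g).top
  have hbase (x : ExtObj G.E) := (normalQuotient hI x).isPullback
  refine isPullback_of_isPullback_top_bot ?_ hF
  exact isPullback_of_isPullback_baseChange (E := G.E) (Z := sq.map (F ⋙ domFunctor G.E))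
    (w := (Square.mapFunctor.map (baseFstNatTrans hI)).app sq)
    (τ := (Square.mapFunctor.map G.trivializationFst).app sq)
    (ζ := (Square.mapFunctor.map (Functor.whiskerLeft F (homNatTrans G.E))).app sq)
    (α := (Square.mapFunctor.map (homToNormalReflection hI)).app sq)
    a.mem (hbase a) (hbase b) (hbase c) (hbase d)
    (isPullback_trivialization_map hI hs hh ht hb) ht hF

end NormalReflection

/-- The Galois structure on extensions given by the normal extensions and the double extensions. -/
noncomputable def derived {𝒞 : Type u} [Category.{v} 𝒞] [HasZeroMorphisms 𝒞] [HasZeroObject 𝒞]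
    {G : GaloisStructure 𝒞} [IsExtensionClass G.E] [HasEffectiveDescent G.E]
    (hI : PreservesType1 G.E G.I) : GaloisStructure (ExtObj G.E) :=
  have := isClosedUnderIsomorphisms_normalExtensions hI
  ofReflection (normalReflection hI) (DoubleExtClass G.E) IsExtensionClass.right_of_comp
    fun a ↦ (normalQuotient hI a).isDoubleExt_unit

end GaloisStructure

/-- from a closed Galois structure `Γ` on a pointed protomodular category
`𝒞` satisfying (E4), (E5), (M) and such that `I` preserves pullbacks of type (1), one
obtains a derived closed Galois structure
`Γ₁ = (Ext_ℰ(𝒞), NExt_Γ(𝒞), I₁, H₁, η¹, ε¹, ℰ¹, ℱ¹)` whose subcategory is that of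
`Γ`-normal extensions and whose class of extensions is the class of double
`ℰ`-extensions, such that `Ext_ℰ(𝒞)` is pointed protomodular, `(Ext_ℰ(𝒞), ℰ¹)`
satisfies (E4), (E5), (M), and `I₁` preserves pullbacks of split epimorphisms of `ℰ¹`
along morphisms of `ℰ¹`. -/
theorem derived_galois_structure
    {𝒞 : Type u} [Category.{v} 𝒞] [HasZeroMorphisms 𝒞] [HasZeroObject 𝒞]
    (G : GaloisStructure 𝒞) (hpm : ProtomodularCat 𝒞)
    (h4 : AxE4 G.E) (h5 : AxE5 G.E) (hM : AxM G.E)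
    (htype1 : PreservesType1 G.E G.I) :
    ∃ G₁ : GaloisStructure (ExtObj G.E),
      (∀ a : ExtObj G.E, G₁.inX a ↔ G.Normal a.hom) ∧
      (G₁.E = DoubleExtClass G.E) ∧
      (∀ {a b : ExtObj G.E} (φ : a ⟶ b), G₁.F φ ↔
        (G.Normal a.hom ∧ G.Normal b.hom ∧ IsDoubleExt φ)) ∧
      HasZeroObject (ExtObj G.E) ∧ ProtomodularCat (ExtObj G.E) ∧
      AxE4 G₁.E ∧ AxE5 G₁.E ∧ AxM G₁.E ∧
      PreservesType1 G₁.E G₁.I := by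
  have : IsExtensionClass G.E := isExtensionClass_iff.2 ⟨G.E1, G.E2, G.E3, h4, h5⟩
  have : HasEffectiveDescent G.E := axM_iff_hasEffectiveDescent.1 hM
  have hM₁ : AxM (DoubleExtClass G.E) := axM_iff_hasEffectiveDescent.2 inferInstance
  exact ⟨GaloisStructure.derived htype1, fun _ ↦ Iff.rfl, rfl, fun _ ↦ Iff.rfl, inferInstance,
    ⟨hasSplitEpiPullbacks_of_isExtensionClass (DoubleExtClass G.E), ExtObj.splitShortFive hpm.2⟩,
    IsExtensionClass.right_of_comp (E := DoubleExtClass G.E),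
    IsExtensionClass.middle (E := DoubleExtClass G.E), hM₁,
    GaloisStructure.preservesType1_normalReflection htype1⟩
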